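/- arXiv:1107.4378 — 2 statements merged into one kernel-verified Lean document; each statement's English description precedes it below -/
import Mathlib

section
/- Fix a constant ε > 0. There exist constants γ > 0, c > 0 and a threshold n₀ (all depending only on ε) such that the following holds for all integers n ≥ n₀ and m with (1+ε)·n ≤ m. Let i* be the smallest i ≥ 1 such that E[X_i] < n^{2/3}, and let X_* be the number of vertices of the random cuckoo graph with n edges on parts of size m lying in connected components with at least i* edges. Then Pr(X_* ≥ γ·n^{2/3}) ≤ n^{−c·log n}. -/
open Classical

/-- Adjacency: item `x` gives an edge from left vertex `h₀ x` to right vertex `h₁ x`. -/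
def cuckooAdj (n m : ℕ) (h₀ h₁ : Fin n → Fin m) (a b : Fin m ⊕ Fin m) : Prop :=
  ∃ x : Fin n, a = Sum.inl (h₀ x) ∧ b = Sum.inr (h₁ x)

/-- Connectivity in the cuckoo graph: equivalence generated by adjacency. -/
def cuckooConn (n m : ℕ) (h₀ h₁ : Fin n → Fin m) : (Fin m ⊕ Fin m) → (Fin m ⊕ Fin m) → Prop :=
  Relation.EqvGen (cuckooAdj n m h₀ h₁)

/-- `C(v)`: number of edges (items, with multiplicity) in the component of `v`. -/
noncomputable def cuckooC (n m : ℕ) (h₀ h₁ : Fin n → Fin m) (v : Fin m ⊕ Fin m) : ℕ :=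
  Nat.card {x : Fin n // cuckooConn n m h₀ h₁ (Sum.inl (h₀ x)) v}

/-- `V(v)`: number of vertices in the component of `v`. -/
noncomputable def cuckooV (n m : ℕ) (h₀ h₁ : Fin n → Fin m) (v : Fin m ⊕ Fin m) : ℕ :=
  Nat.card {u : Fin m ⊕ Fin m // cuckooConn n m h₀ h₁ u v}

/-- `B_v`: cyclotomic number of the component of `v`, `C(v) − V(v) + 1`. -/
noncomputable def cuckooB (n m : ℕ) (h₀ h₁ : Fin n → Fin m) (v : Fin m ⊕ Fin m) : ℕ :=
  cuckooC n m h₀ h₁ v + 1 - cuckooV n m h₀ h₁ v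

/-- The sample space: a pair of hash functions chosen uniformly at random. -/
abbrev HashPair (n m : ℕ) := (Fin n → Fin m) × (Fin n → Fin m)

/-- Probability of an event under uniformly random hash functions. -/
noncomputable def cuckooPr (n m : ℕ) (E : HashPair n m → Prop) : ℝ :=
  (Nat.card {ω : HashPair n m // E ω} : ℝ) / (Nat.card (HashPair n m) : ℝ)

/-- Expectation of a real random variable under uniformly random hash functions. -/
noncomputable def cuckooE (n m : ℕ) (f : HashPair n m → ℝ) : ℝ :=
  (∑ ω : HashPair n m, f ω) / (Nat.card (HashPair n m) : ℝ)

/-- `X_i`: number of vertices lying in components with exactly `i` edges. -/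
noncomputable def cuckooX (n m : ℕ) (h₀ h₁ : Fin n → Fin m) (i : ℕ) : ℕ :=
  Nat.card {v : Fin m ⊕ Fin m // cuckooC n m h₀ h₁ v = i}

/-- The setoid of connected components. -/
def cuckooSetoid (n m : ℕ) (h₀ h₁ : Fin n → Fin m) : Setoid (Fin m ⊕ Fin m) :=
  ⟨cuckooConn n m h₀ h₁, Relation.EqvGen.is_equivalence _⟩

/-- `ē(G) = ∑_H max(e(H),0)`, the total excess over all components
(`ℕ`-subtraction realizes the `max` with `0`). -/
noncomputable def cuckooEbar (n m : ℕ) (h₀ h₁ : Fin n → Fin m) : ℕ :=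
  ∑ᶠ c : Quotient (cuckooSetoid n m h₀ h₁),
    (Nat.card {x : Fin n // Quotient.mk (cuckooSetoid n m h₀ h₁) (Sum.inl (h₀ x)) = c}
      - Nat.card {u : Fin m ⊕ Fin m // Quotient.mk (cuckooSetoid n m h₀ h₁) u = c})

/-!
Explore a component of the cuckoo graph one vertex at a time. While at most `J` items and vertices
have been used up, the number of edges found follows, up to errors polynomial in `J` and of order
`1 / m`, a branching process with Poisson offspring of mean `n / m`. Hence `E[X_j]` is `2 * m` times
a Borel–Tanner probability, up to `8 * J ^ 4`, for every `j < J`. As `n / m ≤ (1 + ε)⁻¹ < 1`, these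
probabilities decay geometrically in `j`, so the mean number of vertices in components with at
least `i` and fewer than `J` edges is at most of order `E[X_i] + J ^ 5`.

Rehashing one item changes this number by at most `6 * J`, so McDiarmid's inequality bounds the
probability of a deviation by `n ^ (2 / 3)` by `exp (-n ^ (1 / 3) / (72 * J ^ 2))`. A component with
`J` or more edges exists with probability `O(n * z ^ (-J))` for some `z > 1`, by an exponential
moment of the exploration. Both are superpolynomially small for `J = n ^ (1 / 10)`, and then
`J ^ 5 ≤ n ^ (2 / 3)`.
-/

open Finset
open scoped BigOperators

section Exploration

variable {ι : Type*} {α β : Type*}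

/-- The left vertices `S` and right vertices `T` together form a union of components of the
bipartite multigraph with one edge `h₀ x — h₁ x` for each `x`. -/
def IsClosedPair (h₀ : ι → α) (h₁ : ι → β) (S : Set α) (T : Set β) : Prop :=
  ∀ x, h₀ x ∈ S ↔ h₁ x ∈ T

theorem IsClosedPair.symm {h₀ : ι → α} {h₁ : ι → β} {S : Set α} {T : Set β}
    (h : IsClosedPair h₀ h₁ S T) : IsClosedPair h₁ h₀ T S :=
  fun x => (h x).symm

/-- The item `x` is an edge of a component that meets the left vertices `A` or the right
vertices `B`. Phrasing this with closed pairs instead of paths makes the exploration of one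
vertex at a time a statement about sets. -/
def IsReachable (h₀ : ι → α) (h₁ : ι → β) (A : Set α) (B : Set β) (x : ι) : Prop :=
  ∀ S T, IsClosedPair h₀ h₁ S T → A ⊆ S → B ⊆ T → h₀ x ∈ S

theorem isReachable_swap {h₀ : ι → α} {h₁ : ι → β} {A : Set α} {B : Set β} {x : ι} :
    IsReachable h₁ h₀ B A x ↔ IsReachable h₀ h₁ A B x :=
  ⟨fun h S T hST hA hB => (hST x).2 (h T S hST.symm hB hA),
    fun h T S hTS hB hA => (hTS x).2 (h S T hTS.symm hA hB)⟩

theorem not_isReachable_empty {h₀ : ι → α} {h₁ : ι → β} {x : ι} : ¬IsReachable h₀ h₁ ∅ ∅ x :=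
  fun h => h ∅ ∅ (fun _ => Iff.rfl) Set.Subset.rfl Set.Subset.rfl

/-- The number of edges in the components that meet the left vertices `A` or the right
vertices `B`. -/
noncomputable def reachCount [Fintype ι] (h₀ : ι → α) (h₁ : ι → β) (A : Finset α)
    (B : Finset β) : ℕ :=
  #{x | IsReachable h₀ h₁ (A : Set α) (B : Set β) x}

theorem reachCount_swap [Fintype ι] (h₀ : ι → α) (h₁ : ι → β) (A : Finset α) (B : Finset β) :
    reachCount h₁ h₀ B A = reachCount h₀ h₁ A B :=
  congrArg card (filter_congr fun _ _ => isReachable_swap)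

theorem reachCount_empty [Fintype ι] (h₀ : ι → α) (h₁ : ι → β) : reachCount h₀ h₁ ∅ ∅ = 0 := by
  simp [reachCount, not_isReachable_empty]

theorem reachCount_le_card [Fintype ι] (h₀ : ι → α) (h₁ : ι → β) (A : Finset α) (B : Finset β) :
    reachCount h₀ h₁ A B ≤ Fintype.card ι :=
  card_le_univ _

theorem forall_iff_mem_and_notMem (D : Finset ι) {p : ι → Prop} :
    (∀ x, p x) ↔ (∀ x : {x // x ∈ D}, p x) ∧ ∀ x : {x // x ∉ D}, p x := by
  simp only [Subtype.forall]
  exact ⟨fun h => ⟨fun x _ => h x, fun x _ => h x⟩,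
    fun h x => if hx : x ∈ D then h.1 x hx else h.2 x hx⟩

variable [DecidableEq ι]

/-- The function on `ι` that agrees with `g` on `D` and with `k` off `D`. -/
def glue (D : Finset ι) (g : {x // x ∈ D} → β) (k : {x // x ∉ D} → β) (x : ι) : β :=
  if h : x ∈ D then g ⟨x, h⟩ else k ⟨x, h⟩

@[simp]
theorem glue_mem {D : Finset ι} (g : {x // x ∈ D} → β) (k : {x // x ∉ D} → β)
    (x : {x // x ∈ D}) : glue D g k x = g x :=
  dif_pos x.2

@[simp]
theorem glue_notMem {D : Finset ι} (g : {x // x ∈ D} → β) (k : {x // x ∉ D} → β)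
    (x : {x // x ∉ D}) : glue D g k x = k x :=
  dif_neg x.2

variable {u : α} {D : Finset ι} {k : {x // x ∉ D} → {a // a ≠ u}} {g : {x // x ∈ D} → β}
  {k₁ : {x // x ∉ D} → β}

theorem isClosedPair_glue {S : Set α} {T : Set β} (hu : u ∈ S) :
    IsClosedPair (glue D (fun _ => u) fun x => (k x : α)) (glue D g k₁) S T ↔
      Set.range g ⊆ T ∧ IsClosedPair k k₁ (Subtype.val ⁻¹' S) T := by
  simp only [IsClosedPair, forall_iff_mem_and_notMem D, glue_mem, glue_notMem, hu, true_iff,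
    Set.range_subset_iff, Set.mem_preimage]

theorem isReachable_glue_notMem {A : Set α} {B : Set β} (hu : u ∈ A) (x : {x // x ∉ D}) :
    IsReachable (glue D (fun _ => u) fun x => (k x : α)) (glue D g k₁) A B x ↔
      IsReachable k k₁ (Subtype.val ⁻¹' A) (B ∪ Set.range g) x := by
  constructor
  · intro h S T hST hA hB
    have hS : Subtype.val ⁻¹' insert u (Subtype.val '' S) = S := by
      ext a
      simp [a.2]
    have hx := h (insert u (Subtype.val '' S)) T
      ((isClosedPair_glue (Set.mem_insert _ _)).2
        ⟨Set.subset_union_right.trans hB, by rwa [hS]⟩)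
      (fun a ha => or_iff_not_imp_left.2 fun hau => ⟨⟨a, hau⟩, hA ha, rfl⟩)
      (Set.subset_union_left.trans hB)
    rwa [glue_notMem, ← Set.mem_preimage, hS] at hx
  · intro h S T hST hA hB
    obtain ⟨hg, hk⟩ := (isClosedPair_glue (hA hu)).1 hST
    simpa using h _ T hk (Set.preimage_mono hA) (Set.union_subset hB hg)

theorem isReachable_glue_mem {A : Set α} {B : Set β} (hu : u ∈ A) (x : {x // x ∈ D}) :
    IsReachable (glue D (fun _ => u) fun x => (k x : α)) (glue D g k₁) A B x := by
  intro S T _ hA _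
  simpa using hA hu

theorem reachCount_glue [Fintype ι] [DecidableEq α] [DecidableEq β] {A : Finset α} {B : Finset β}
    (hu : u ∈ A) :
    reachCount (glue D (fun _ => u) fun x => (k x : α)) (glue D g k₁) A B =
      #D + reachCount k k₁ (A.subtype (· ≠ u)) (B ∪ univ.image g) := by
  have hA : ((A.subtype (· ≠ u) : Finset {a // a ≠ u}) : Set {a // a ≠ u}) =
      Subtype.val ⁻¹' (A : Set α) := by
    ext a
    simp
  rw [reachCount, reachCount, card_filter, card_filter,
    ← Fintype.sum_subtype_add_sum_subtype (· ∈ D)]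
  simp [isReachable_glue_mem (mem_coe.2 hu), isReachable_glue_notMem (mem_coe.2 hu), hA]

end Exploration

section ExplorationMean

/-- The probability that each of `d` given items, and none of the `N - d` others, is chosen when
every item is chosen independently with probability `p`. -/
noncomputable def bernoulliWeight (p : ℝ) (N d : ℕ) : ℝ :=
  p ^ d * (1 - p) ^ (N - d)

theorem bernoulliWeight_nonneg {p : ℝ} (h₀ : 0 ≤ p) (h₁ : p ≤ 1) (N d : ℕ) :
    0 ≤ bernoulliWeight p N d :=
  mul_nonneg (pow_nonneg h₀ d) (pow_nonneg (sub_nonneg.2 h₁) _)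

variable {ι α β : Type*} [Fintype ι]

theorem sum_bernoulliWeight_mul_pow (p x : ℝ) :
    ∑ D : Finset ι, bernoulliWeight p (Fintype.card ι) #D * x ^ #D =
      (1 + p * (x - 1)) ^ Fintype.card ι := by
  rw [show 1 + p * (x - 1) = p * x + (1 - p) by ring, ← Fintype.sum_pow_mul_eq_add_pow]
  refine sum_congr rfl fun D _ => ?_
  rw [bernoulliWeight, mul_pow]
  ring

variable [DecidableEq ι] [Fintype α] [Fintype β]

theorem expect_eq_expect_glue (D : Finset ι) (f : (ι → β) → ℝ) :
    𝔼 h, f h = 𝔼 g : {x // x ∈ D} → β, 𝔼 k : {x // x ∉ D} → β, f (glue D g k) := by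
  rw [← expect_product', univ_product_univ]
  exact (Fintype.expect_equiv (Equiv.piEquivPiSubtypeProd (· ∈ D) fun _ => β).symm _ _
    fun _ => rfl).symm

variable (ι) in
/-- The mean of `F` at the number of edges in the components meeting `A` or `B`, over uniformly
random endpoint maps. The sides `α`, `β` and the items `ι` are arbitrary, since all three change
when vertices are explored one at a time. -/
noncomputable def explorationMean (A : Finset α) (B : Finset β) (F : ℕ → ℝ) : ℝ :=
  𝔼 h₀ : ι → α, 𝔼 h₁ : ι → β, F (reachCount h₀ h₁ A B)

theorem explorationMean_swap (A : Finset α) (B : Finset β) (F : ℕ → ℝ) :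
    explorationMean ι B A F = explorationMean ι A B F := by
  rw [explorationMean, expect_comm]
  simp only [reachCount_swap _ _ A B, explorationMean]

theorem explorationMean_mono (A : Finset α) (B : Finset β) {F G : ℕ → ℝ}
    (h : ∀ e ≤ Fintype.card ι, F e ≤ G e) :
    explorationMean ι A B F ≤ explorationMean ι A B G :=
  expect_le_expect fun _ _ => expect_le_expect fun _ _ => h _ (reachCount_le_card _ _ _ _)

theorem explorationMean_empty [Nonempty α] [Nonempty β] (F : ℕ → ℝ) :
    explorationMean ι (∅ : Finset α) (∅ : Finset β) F = F 0 := by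
  simp [explorationMean, reachCount_empty]

theorem explorationMean_const_mul (A : Finset α) (B : Finset β) (c : ℝ) (F : ℕ → ℝ) :
    explorationMean ι A B (fun e => c * F e) = c * explorationMean ι A B F := by
  simp only [explorationMean, mul_expect]

variable [DecidableEq α]

theorem sum_eq_sum_glue (u : α) (f : (ι → α) → ℝ) :
    ∑ h, f h = ∑ D : Finset ι, ∑ k : {x // x ∉ D} → {a // a ≠ u},
      f (glue D (fun _ => u) fun x => (k x : α)) := by
  rw [← sum_fiberwise univ (fun h : ι → α => univ.filter (h · = u))]
  refine sum_congr rfl fun D _ => Eq.symm (sum_bij (fun k _ => glue D (fun _ => u) fun x => k x)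
    (fun k _ => ?_) (fun k _ k' _ h => ?_) (fun h hD => ?_) fun _ _ => rfl)
  · simp only [mem_filter, mem_univ, true_and, Finset.ext_iff, forall_iff_mem_and_notMem D]
    exact ⟨fun x => by simp, fun x => by simp [(k x).2, x.2]⟩
  · ext x
    simpa using congrFun h x
  · simp only [mem_filter, mem_univ, true_and, Finset.ext_iff] at hD
    refine ⟨fun x => ⟨h x, (hD x).not.2 x.2⟩, mem_univ _, funext ?_⟩
    rw [forall_iff_mem_and_notMem D]
    simpa using fun x hx => ((hD x).2 hx).symm

theorem expect_eq_sum_bernoulliWeight_mul_expect (u : α) (f : (ι → α) → ℝ) :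
    𝔼 h, f h = ∑ D : Finset ι, bernoulliWeight (Fintype.card α : ℝ)⁻¹ (Fintype.card ι) #D *
      𝔼 k : {x // x ∉ D} → {a // a ≠ u}, f (glue D (fun _ => u) fun x => (k x : α)) := by
  have ha : (Fintype.card α : ℝ) ≠ 0 := Nat.cast_ne_zero.2 (Fintype.card_pos_iff.2 ⟨u⟩).ne'
  have hcard : (Fintype.card {a // a ≠ u} : ℝ) = Fintype.card α - 1 := by
    simp [Fintype.card_subtype_compl, Nat.cast_sub (Fintype.card_pos_iff.2 ⟨u⟩)]
  rw [Fintype.expect_eq_sum_div_card, sum_eq_sum_glue u, sum_div]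
  refine sum_congr rfl fun D _ => ?_
  have hD : Fintype.card ι = #D + Fintype.card {x // x ∉ D} := by
    simp [Fintype.card_subtype_compl, card_le_univ]
  rw [← Fintype.card_mul_expect, Fintype.card_fun, Fintype.card_fun, bernoulliWeight, hD,
    Nat.add_sub_cancel_left, Nat.cast_pow, Nat.cast_pow, hcard, pow_add,
    show 1 - (Fintype.card α : ℝ)⁻¹ = (Fintype.card α - 1) / Fintype.card α by field_simp,
    inv_pow, div_pow]
  field_simp

/-- Exploring the left vertex `u`: the set `D` of its incident items is a Bernoulli sample, and
`u` is then replaced by the other endpoints of these items. -/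
theorem explorationMean_eq_sum [DecidableEq β] {A : Finset α} {B : Finset β} {u : α}
    (hu : u ∈ A) (F : ℕ → ℝ) :
    explorationMean ι A B F =
      ∑ D : Finset ι, bernoulliWeight (Fintype.card α : ℝ)⁻¹ (Fintype.card ι) #D *
        𝔼 g : {x // x ∈ D} → β, explorationMean {x // x ∉ D} (A.subtype (· ≠ u))
          (B ∪ univ.image g) fun e => F (#D + e) := by
  rw [explorationMean, expect_eq_sum_bernoulliWeight_mul_expect u]
  refine sum_congr rfl fun D _ => ?_
  simp only [expect_eq_expect_glue D, reachCount_glue hu]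
  rw [expect_comm]
  rfl

end ExplorationMean

section Tail

theorem expect_le_of_nonneg {κ : Type*} [Fintype κ] {f : κ → ℝ} {c : ℝ} (hc : 0 ≤ c)
    (h : ∀ i, f i ≤ c) : 𝔼 i, f i ≤ c := by
  rcases isEmpty_or_nonempty κ with _ | _
  · simpa using hc
  · exact expect_le univ_nonempty fun i _ => h i

theorem card_subtype_ne_add_one {α : Type*} [DecidableEq α] {A : Finset α} {u : α} (hu : u ∈ A) :
    #(A.subtype (· ≠ u)) + 1 = #A := by
  rw [card_subtype, filter_ne', card_erase_add_one hu]

theorem card_union_image_le {ι β : Type*} [DecidableEq β] (B : Finset β) {D : Finset ι}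
    (g : {x // x ∈ D} → β) : #(B ∪ univ.image g) ≤ #B + #D :=
  (card_union_le _ _).trans <| Nat.add_le_add_left (card_image_le.trans_eq (by simp)) _

theorem card_notMem_add_card {ι : Type*} [Fintype ι] [DecidableEq ι] (D : Finset ι) :
    Fintype.card {x // x ∉ D} + #D = Fintype.card ι := by
  simp [Fintype.card_subtype_compl, card_le_univ]

theorem card_ne_add_one {α : Type*} [Fintype α] [DecidableEq α] (u : α) :
    Fintype.card {a // a ≠ u} + 1 = Fintype.card α := by
  simp [Fintype.card_subtype_compl, Nat.sub_add_cancel (Fintype.card_pos_iff.2 ⟨u⟩)]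

theorem one_add_inv_mul_pow_le_exp {μ x : ℝ} {a N : ℕ} (hx : 0 ≤ x) (ha : a ≠ 0)
    (hN : (N : ℝ) ≤ μ * a) : (1 + (a : ℝ)⁻¹ * x) ^ N ≤ Real.exp (x * μ) := by
  have ha' : (0 : ℝ) < a := by positivity
  calc (1 + (a : ℝ)⁻¹ * x) ^ N
      ≤ Real.exp ((a : ℝ)⁻¹ * x) ^ N := by
        gcongr
        rw [add_comm]
        exact Real.add_one_le_exp _
    _ = Real.exp (x * (N / a)) := by
        rw [← Real.exp_nat_mul]
        ring_nf
    _ ≤ Real.exp (x * μ) := by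
        gcongr
        exact (div_le_iff₀ ha').2 hN

universe v

variable {ι : Type*} {α β : Type v} [Fintype ι] [DecidableEq ι] [Fintype α] [Fintype β]
  {A : Finset α} {B : Finset β} {μ y z : ℝ} {i : ℕ}

theorem explorationMean_le_of_nonneg {F : ℕ → ℝ} {c : ℝ} (hc : 0 ≤ c) (h : ∀ e, F e ≤ c) :
    explorationMean ι A B F ≤ c :=
  expect_le_of_nonneg hc fun _ => expect_le_of_nonneg hc fun _ => h _

theorem explorationMean_pow_min_le_of_step [DecidableEq α] [DecidableEq β] {u : α} (hu : u ∈ A)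
    (hy : 1 ≤ y) (hz : 1 ≤ z)
    (hexp : Real.exp ((z * y - 1) * μ) ≤ y) (hα : (Fintype.card ι : ℝ) ≤ μ * Fintype.card α)
    (ih : ∀ D : Finset ι, #D ≤ i → ∀ g : {x // x ∈ D} → β,
      explorationMean {x // x ∉ D} (A.subtype (· ≠ u)) (B ∪ univ.image g)
        (fun e => z ^ min e (i - #D)) ≤ y ^ (#(A.subtype (· ≠ u)) + #(B ∪ univ.image g))) :
    explorationMean ι A B (fun e => z ^ min e i) ≤ y ^ (#A + #B) := by
  have ha : 0 < Fintype.card α := Fintype.card_pos_iff.2 ⟨u⟩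
  have hA := card_subtype_ne_add_one hu
  have step (D : Finset ι) (g : {x // x ∈ D} → β) :
      explorationMean {x // x ∉ D} (A.subtype (· ≠ u)) (B ∪ univ.image g)
        (fun e => z ^ min (#D + e) i) ≤ (z * y) ^ #D * y ^ (#(A.subtype (· ≠ u)) + #B) := by
    have hB := card_union_image_le B g
    rw [mul_pow, mul_assoc, ← pow_add]
    rcases le_or_gt #D i with hD | hD
    · calc _ ≤ explorationMean {x // x ∉ D} (A.subtype (· ≠ u)) (B ∪ univ.image g)
              (fun e => z ^ #D * z ^ min e (i - #D)) :=
            explorationMean_mono _ _ fun e _ => by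
              rw [← pow_add]
              exact pow_le_pow_right₀ hz (by lia)
        _ ≤ _ := by
            rw [explorationMean_const_mul]
            gcongr
            exact (ih D hD g).trans (pow_le_pow_right₀ hy (by lia))
    · refine explorationMean_le_of_nonneg (by positivity) fun e => ?_
      exact (pow_le_pow_right₀ hz (by lia)).trans
        (le_mul_of_one_le_right (by positivity) (one_le_pow₀ hy))
  have hp : (Fintype.card α : ℝ)⁻¹ ≤ 1 := Nat.cast_inv_le_one _
  calc explorationMean ι A B (fun e => z ^ min e i)
      ≤ ∑ D : Finset ι, bernoulliWeight (Fintype.card α : ℝ)⁻¹ (Fintype.card ι) #D *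
          ((z * y) ^ #D * y ^ (#(A.subtype (· ≠ u)) + #B)) := by
        rw [explorationMean_eq_sum hu]
        gcongr with D
        · exact bernoulliWeight_nonneg (by positivity) hp _ _
        · exact expect_le_of_nonneg (by positivity) (step D)
    _ = (1 + (Fintype.card α : ℝ)⁻¹ * (z * y - 1)) ^ Fintype.card ι *
          y ^ (#(A.subtype (· ≠ u)) + #B) := by
        simp only [← mul_assoc, ← sum_mul, sum_bernoulliWeight_mul_pow]
    _ ≤ y * y ^ (#(A.subtype (· ≠ u)) + #B) := by
        gcongr
        exact (one_add_inv_mul_pow_le_exp (by nlinarith) ha.ne' hα).trans hexp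
    _ = y ^ (#A + #B) := by
        rw [← pow_succ', ← hA]
        ring

/-- Truncating the exponent at `i` makes the induction close: an exploration that has found more
than `i` items needs no further control, so the sides never lose more than `#A + #B + i`
vertices. -/
theorem explorationMean_pow_min_le (hμ : 0 ≤ μ) (hy : 1 ≤ y) (hz : 1 ≤ z)
    (hexp : Real.exp ((z * y - 1) * μ) ≤ y)
    (hα : (Fintype.card ι : ℝ) ≤ μ * (Fintype.card α - (#A + #B + i : ℕ)))
    (hβ : (Fintype.card ι : ℝ) ≤ μ * (Fintype.card β - (#A + #B + i : ℕ))) :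
    explorationMean ι A B (fun e => z ^ min e i) ≤ y ^ (#A + #B) := by
  induction hs : #A + #B + i using Nat.strong_induction_on generalizing ι α β i with
  | _ s ih =>
    wlog hA : A.Nonempty generalizing α β
    · rcases B.eq_empty_or_nonempty with rfl | hB
      · obtain rfl := not_nonempty_iff_eq_empty.1 hA
        exact expect_le_of_nonneg (by simp) fun h₀ =>
          expect_le_of_nonneg (by simp) fun h₁ => by simp [reachCount_empty]
      · rw [← explorationMean_swap, add_comm #A]
        rw [add_comm #A] at hα hβ hs
        exact this hβ hα hs hB
    obtain ⟨u, hu⟩ := hA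
    have hα' : (Fintype.card ι : ℝ) ≤ μ * Fintype.card α :=
      hα.trans (mul_le_mul_of_nonneg_left (sub_le_self _ (by positivity)) hμ)
    refine explorationMean_pow_min_le_of_step hu hy hz hexp hα' fun D hD g => ?_
    have hA := card_subtype_ne_add_one hu
    have hB := card_union_image_le B g
    have hle : #(A.subtype (· ≠ u)) + #(B ∪ univ.image g) + (i - #D) + 1 ≤ #A + #B + i := by omega
    have hι : (Fintype.card {x // x ∉ D} : ℝ) ≤ Fintype.card ι :=
      Nat.cast_le.2 (Fintype.card_subtype_le _)
    have hcard : (Fintype.card {a // a ≠ u} : ℝ) + 1 = Fintype.card α :=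
      mod_cast card_ne_add_one u
    refine ih _ (by omega) (hι.trans <| hα.trans ?_) (hι.trans <| hβ.trans ?_) rfl <;>
      refine mul_le_mul_of_nonneg_left ?_ hμ <;> rify at hle ⊢ <;> linarith

theorem explorationMean_tail_le [Nonempty α] [Nonempty β] (hμ : 0 ≤ μ) (hy : 1 ≤ y) (hz : 1 < z)
    (hi : i ≠ 0) (hexp : Real.exp ((z * y - 1) * μ) ≤ y)
    (hα : (Fintype.card ι : ℝ) ≤ μ * (Fintype.card α - (#A + #B + i : ℕ)))
    (hβ : (Fintype.card ι : ℝ) ≤ μ * (Fintype.card β - (#A + #B + i : ℕ))) :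
    explorationMean ι A B (fun e => if i ≤ e then 1 else 0) ≤
      (y ^ (#A + #B) - 1) / (z ^ i - 1) := by
  have hzi : 0 < z ^ i - 1 := sub_pos.2 (one_lt_pow₀ hz hi)
  rw [le_div_iff₀' hzi, ← explorationMean_const_mul, le_sub_iff_add_le]
  have hadd : explorationMean ι A B (fun e => (z ^ i - 1) * if i ≤ e then 1 else 0) + 1 =
      explorationMean ι A B (fun e => ((z ^ i - 1) * if i ≤ e then 1 else 0) + 1) := by
    simp [explorationMean, expect_add_distrib]
  rw [hadd]
  refine (explorationMean_mono A B fun e _ => ?_).trans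
    (explorationMean_pow_min_le hμ hy hz.le hexp hα hβ)
  split_ifs with he
  · simp [min_eq_right he]
  · simpa using one_le_pow₀ hz.le

/-- Replacing `y` by `y ^ t` makes the exponential-moment bound available, with a gain of a
factor of order `t`, when the load is smaller by a factor `t`. -/
theorem exp_rpow_le_rpow {t : ℝ} (hμ : 0 ≤ μ) (hy : 1 ≤ y) (hz : 0 ≤ z) (ht : 0 ≤ t)
    (ht1 : t ≤ 1) (hexp : Real.exp ((z * y - 1) * μ) ≤ y) :
    Real.exp ((z * y ^ t - 1) * (t * μ)) ≤ y ^ t :=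
  calc Real.exp ((z * y ^ t - 1) * (t * μ))
      ≤ Real.exp ((z * y - 1) * (t * μ)) := by
        gcongr
        exact Real.rpow_le_self_of_one_le hy ht1
    _ = Real.exp ((z * y - 1) * μ) ^ t := by
        rw [← Real.exp_mul]
        ring_nf
    _ ≤ y ^ t := by gcongr

theorem exists_exp_le (hμ : 0 < μ) (hμ1 : μ < 1) :
    ∃ y z : ℝ, 1 < y ∧ 1 < z ∧ Real.exp ((z * y - 1) * μ) ≤ y := by
  obtain ⟨y, hy, hyμ⟩ := exists_between ((one_lt_inv₀ hμ).2 hμ1)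
  have hy0 : 0 < y := zero_lt_one.trans hy
  refine ⟨y, (1 + Real.log y / μ) / y, hy, ?_, le_of_eq ?_⟩
  · have hlog : (y - 1) * μ < Real.log y :=
      calc (y - 1) * μ < (y - 1) * y⁻¹ := by
            gcongr
            exact (lt_inv_comm₀ hy0 hμ).1 hyμ
        _ = 1 - y⁻¹ := by field_simp
        _ ≤ Real.log y := Real.one_sub_inv_le_log_of_pos hy0
    rw [one_lt_div hy0, ← sub_lt_iff_lt_add', lt_div_iff₀ hμ]
    exact hlog
  · rw [div_mul_cancel₀ _ hy0.ne', add_sub_cancel_left, div_mul_cancel₀ _ hμ.ne', Real.exp_log hy0]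

theorem explorationMean_tail_le_of_load_le [Nonempty α] [Nonempty β] {t : ℝ} (hμ : 0 ≤ μ)
    (hy : 1 ≤ y) (hz : 1 < z) (hi : i ≠ 0) (hexp : Real.exp ((z * y - 1) * μ) ≤ y) (ht : 0 ≤ t)
    (ht1 : t ≤ 1) (hAB : #A + #B = 1)
    (hα : (Fintype.card ι : ℝ) ≤ t * μ * (Fintype.card α - (1 + i : ℕ)))
    (hβ : (Fintype.card ι : ℝ) ≤ t * μ * (Fintype.card β - (1 + i : ℕ))) :
    explorationMean ι A B (fun e => if i ≤ e then 1 else 0) ≤ t * (y - 1) / (z ^ i - 1) := by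
  have hzi : 0 < z ^ i - 1 := sub_pos.2 (one_lt_pow₀ hz hi)
  refine (explorationMean_tail_le (mul_nonneg ht hμ) (Real.one_le_rpow hy ht) hz hi
    (exp_rpow_le_rpow hμ hy (by positivity) ht ht1 hexp) (by rwa [hAB]) (by rwa [hAB])).trans ?_
  rw [hAB, pow_one]
  gcongr
  have hbernoulli := rpow_one_add_le_one_add_mul_self (show -1 ≤ y - 1 by linarith) ht ht1
  rwa [add_sub_cancel, ← sub_le_iff_le_add'] at hbernoulli

end Tail

section BorelTanner

/-- The probability of `d` under the Poisson law with parameter `l`. -/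
noncomputable def poissonWeight (l : ℝ) (d : ℕ) : ℝ :=
  Real.exp (-l) * l ^ d / (d.factorial : ℝ)

theorem poissonWeight_nonneg {l : ℝ} (hl : 0 ≤ l) (d : ℕ) : 0 ≤ poissonWeight l d := by
  unfold poissonWeight
  positivity

theorem sum_poissonWeight_le_one {l : ℝ} (hl : 0 ≤ l) (j : ℕ) :
    ∑ d ∈ range j, poissonWeight l d ≤ 1 :=
  calc ∑ d ∈ range j, poissonWeight l d
      = Real.exp (-l) * ∑ d ∈ range j, l ^ d / (d.factorial : ℝ) := by
        simp only [poissonWeight, mul_div_assoc, mul_sum]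
    _ ≤ Real.exp (-l) * Real.exp l := by
        gcongr
        exact Real.sum_le_exp_of_nonneg hl _
    _ = 1 := by rw [← Real.exp_add, neg_add_cancel, Real.exp_zero]

/-- The number of forests on `q + j` labelled vertices whose components are rooted at `q` given
vertices, divided by `j!`. -/
noncomputable def forestCoeff (q j : ℕ) : ℝ :=
  if j = 0 then 1 else (q : ℝ) * (q + j) ^ (j - 1) / (j.factorial : ℝ)

theorem forestCoeff_nonneg (q j : ℕ) : 0 ≤ forestCoeff q j := by
  unfold forestCoeff
  positivity

theorem add_mul_forestCoeff (q j : ℕ) :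
    (q + j) * forestCoeff q j = (q : ℝ) * ((q + j) ^ j / (j.factorial : ℝ)) := by
  rcases j with _ | j
  · simp [forestCoeff]
  · rw [forestCoeff, if_neg j.succ_ne_zero, Nat.add_sub_cancel, pow_succ]
    ring

theorem sum_pow_div_factorial_mul_factorial (K : ℝ) (j : ℕ) :
    ∑ d ∈ range (j + 1), K ^ (j - d) / ((d.factorial : ℝ) * ((j - d).factorial : ℝ)) =
      (1 + K) ^ j / (j.factorial : ℝ) := by
  rw [add_pow, sum_div]
  refine sum_congr rfl fun d hd => ?_
  rw [Nat.cast_choose ℝ (mem_range_succ_iff.1 hd)]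
  field_simp
  simp

theorem sum_mul_pow_div_factorial_mul_factorial (K : ℝ) (j : ℕ) :
    ∑ d ∈ range (j + 2),
        d * (K ^ (j + 1 - d) / ((d.factorial : ℝ) * ((j + 1 - d).factorial : ℝ))) =
      (1 + K) ^ j / (j.factorial : ℝ) := by
  rw [sum_range_succ', ← sum_pow_div_factorial_mul_factorial, Nat.cast_zero, zero_mul, add_zero]
  refine sum_congr rfl fun d _ => ?_
  rw [Nat.add_sub_add_right, Nat.factorial_succ]
  push_cast
  field_simp

/-- Abel's identity: removing a root of a forest turns its `d` children into roots. -/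
theorem forestCoeff_succ (q j : ℕ) :
    forestCoeff (q + 1) j =
      ∑ d ∈ range (j + 1), forestCoeff (q + d) (j - d) / (d.factorial : ℝ) := by
  rcases j with _ | j
  · simp [forestCoeff]
  set K : ℝ := q + (j + 1 : ℕ) with hK
  have hK0 : K ≠ 0 := by positivity
  have hterm : ∀ d ∈ range (j + 2),
      K * (forestCoeff (q + d) (j + 1 - d) / (d.factorial : ℝ)) =
        q * (K ^ (j + 1 - d) / ((d.factorial : ℝ) * ((j + 1 - d).factorial : ℝ))) +
          d * (K ^ (j + 1 - d) / ((d.factorial : ℝ) * ((j + 1 - d).factorial : ℝ))) := by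
    intro d hd
    have h := add_mul_forestCoeff (q + d) (j + 1 - d)
    rw [← Nat.cast_add, add_assoc, Nat.add_sub_cancel' (mem_range_succ_iff.1 hd), Nat.cast_add,
      ← hK, Nat.cast_add] at h
    rw [← mul_div_assoc, h]
    field_simp
  refine mul_left_cancel₀ hK0 ?_
  rw [mul_sum, sum_congr rfl hterm, sum_add_distrib, ← mul_sum,
    sum_pow_div_factorial_mul_factorial, sum_mul_pow_div_factorial_mul_factorial, forestCoeff,
    if_neg j.succ_ne_zero, Nat.add_sub_cancel, Nat.factorial_succ, hK]
  push_cast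
  field_simp
  ring

theorem forestCoeff_one_succ_le (j : ℕ) :
    forestCoeff 1 (j + 1) ≤ Real.exp 1 * forestCoeff 1 j := by
  have hcoeff (i : ℕ) : forestCoeff 1 i = (i + 1 : ℝ) ^ i / ((i + 1) * i.factorial) := by
    have h := add_mul_forestCoeff 1 i
    rw [Nat.cast_one, one_mul, add_comm (1 : ℝ)] at h
    rw [eq_div_iff (by positivity), mul_comm (_ + 1 : ℝ), ← mul_assoc, mul_comm, ← mul_assoc, h]
    field_simp
  have hexp : (j + 1 + 1 : ℝ) ^ j ≤ Real.exp 1 * (j + 1) ^ j :=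
    calc (j + 1 + 1 : ℝ) ^ j = (1 + (j + 1 : ℝ)⁻¹ * 1) ^ j * (j + 1) ^ j := by
          rw [← mul_pow]
          field_simp
      _ ≤ Real.exp 1 * (j + 1) ^ j := by
          gcongr
          simpa using one_add_inv_mul_pow_le_exp (μ := 1) (N := j) zero_le_one j.succ_ne_zero
            (by simp)
  calc forestCoeff 1 (j + 1) = (j + 1 + 1 : ℝ) ^ j / ((j + 1) * j.factorial) := by
        rw [hcoeff, Nat.factorial_succ, pow_succ]
        push_cast
        field_simp
    _ ≤ Real.exp 1 * (j + 1) ^ j / ((j + 1) * j.factorial) := by gcongr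
    _ = Real.exp 1 * forestCoeff 1 j := by rw [hcoeff, mul_div_assoc]

/-- The probability that a Galton–Watson forest with `q` roots and Poisson offspring of mean `l`
has exactly `j` edges: the Borel–Tanner law, shifted by `q`. -/
noncomputable def borelTanner (l : ℝ) (q j : ℕ) : ℝ :=
  Real.exp (-(l * (q + j))) * l ^ j * forestCoeff q j

theorem borelTanner_zero (l : ℝ) (j : ℕ) : borelTanner l 0 j = if j = 0 then 1 else 0 := by
  split_ifs with hj <;> simp [borelTanner, forestCoeff, hj]

/-- Conditioning on the number of children of one root. -/
theorem borelTanner_succ (l : ℝ) (q j : ℕ) :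
    borelTanner l (q + 1) j =
      ∑ d ∈ range (j + 1), poissonWeight l d * borelTanner l (q + d) (j - d) := by
  rw [borelTanner, forestCoeff_succ, mul_sum]
  refine sum_congr rfl fun d hd => ?_
  have hd : d ≤ j := mem_range_succ_iff.1 hd
  have hexp : Real.exp (-(l * ((q + 1 : ℕ) + j))) =
      Real.exp (-l) * Real.exp (-(l * ((q + d : ℕ) + (j - d : ℕ)))) := by
    rw [← Real.exp_add]
    push_cast [hd]
    ring_nf
  rw [hexp, ← pow_mul_pow_sub l hd, poissonWeight, borelTanner]
  ring

theorem borelTanner_nonneg {l : ℝ} (hl : 0 ≤ l) (q j : ℕ) : 0 ≤ borelTanner l q j := by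
  have := forestCoeff_nonneg q j
  unfold borelTanner
  positivity

theorem borelTanner_le_one {l : ℝ} (hl : 0 ≤ l) (q j : ℕ) : borelTanner l q j ≤ 1 := by
  induction hs : q + j using Nat.strong_induction_on generalizing q j with
  | _ s ih =>
    rcases q with _ | q
    · rw [borelTanner_zero]
      split_ifs <;> norm_num
    · rw [borelTanner_succ]
      refine (sum_le_sum fun d hd => mul_le_of_le_one_right (poissonWeight_nonneg hl d) ?_).trans
        (sum_poissonWeight_le_one hl _)
      have := mem_range_succ_iff.1 hd
      exact ih _ (by omega) _ _ rfl

theorem borelTanner_one_succ_le {l : ℝ} (hl : 0 ≤ l) (j : ℕ) :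
    borelTanner l 1 (j + 1) ≤ l * Real.exp (1 - l) * borelTanner l 1 j := by
  have hexp : Real.exp (-(l * ((1 : ℕ) + (j + 1 : ℕ)))) =
      Real.exp (-l) * Real.exp (-(l * ((1 : ℕ) + j))) := by
    rw [← Real.exp_add]
    push_cast
    ring_nf
  calc borelTanner l 1 (j + 1)
      ≤ Real.exp (-l) * Real.exp (-(l * ((1 : ℕ) + j))) * l ^ (j + 1) *
          (Real.exp 1 * forestCoeff 1 j) := by
        rw [borelTanner, hexp]
        gcongr
        exact forestCoeff_one_succ_le j
    _ = l * Real.exp (1 - l) * borelTanner l 1 j := by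
        rw [borelTanner, sub_eq_add_neg, Real.exp_add]
        ring

theorem borelTanner_one_le_pow_mul {l : ℝ} (hl : 0 ≤ l) {i j : ℕ} (hij : i ≤ j) :
    borelTanner l 1 j ≤ (l * Real.exp (1 - l)) ^ (j - i) * borelTanner l 1 i := by
  obtain ⟨k, rfl⟩ := Nat.exists_eq_add_of_le hij
  rw [Nat.add_sub_cancel_left]
  clear hij
  induction k with
  | zero => simp
  | succ k ih =>
    calc borelTanner l 1 (i + k + 1)
        ≤ l * Real.exp (1 - l) * borelTanner l 1 (i + k) := borelTanner_one_succ_le hl _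
      _ ≤ l * Real.exp (1 - l) * ((l * Real.exp (1 - l)) ^ k * borelTanner l 1 i) := by gcongr
      _ = _ := by ring

theorem sum_Ico_borelTanner_one_le {l : ℝ} (hl : 0 ≤ l) (hρ : l * Real.exp (1 - l) < 1)
    (i k : ℕ) :
    ∑ j ∈ Ico i k, borelTanner l 1 j ≤ (1 - l * Real.exp (1 - l))⁻¹ * borelTanner l 1 i :=
  calc ∑ j ∈ Ico i k, borelTanner l 1 j
      ≤ ∑ j ∈ Ico i k, (l * Real.exp (1 - l)) ^ (j - i) * borelTanner l 1 i :=
        sum_le_sum fun j hj => borelTanner_one_le_pow_mul hl (mem_Ico.1 hj).1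
    _ = (∑ j ∈ range (k - i), (l * Real.exp (1 - l)) ^ j) * borelTanner l 1 i := by
        simp [sum_Ico_eq_sum_range, sum_mul]
    _ ≤ _ := by
        refine mul_le_mul_of_nonneg_right ?_ (borelTanner_nonneg hl 1 i)
        rw [← tsum_geometric_of_lt_one (by positivity) hρ]
        exact (summable_geometric_of_lt_one (by positivity) hρ).sum_le_tsum _
          fun _ _ => by positivity

end BorelTanner

section BinomialPoisson

theorem abs_div_sub_div_le {n m J x y : ℝ} (hm : 0 < m) (hn : 0 ≤ n) (hnm : n ≤ m)
    (hJ : 2 * J ≤ m) (hx : n - J ≤ x) (hxn : x ≤ n) (hy : m - J ≤ y) (hym : y ≤ m) :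
    |x / y - n / m| ≤ 2 * J / m := by
  have hy0 : 0 < y := by linarith
  have hJ0 : 0 ≤ J := by linarith
  have hnum : |x * m - y * n| ≤ J * m := by
    rw [abs_le]
    constructor <;> nlinarith
  rw [div_sub_div _ _ hy0.ne' hm.ne', abs_div, abs_of_pos (mul_pos hy0 hm),
    div_le_div_iff₀ (mul_pos hy0 hm) hm]
  nlinarith [mul_le_mul_of_nonneg_right hnum hm.le,
    mul_le_mul_of_nonneg_left (show m ≤ 2 * y by linarith) (mul_nonneg hJ0 hm.le)]

theorem exp_neg_sub_exp_neg_le {x y : ℝ} (hy : 0 ≤ y) :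
    Real.exp (-y) - Real.exp (-x) ≤ |x - y| :=
  calc Real.exp (-y) - Real.exp (-x) = Real.exp (-y) * (1 - Real.exp (-(x - y))) := by
        rw [mul_sub, ← Real.exp_add]
        ring_nf
    _ ≤ Real.exp (-y) * |x - y| := by
        gcongr
        linarith [Real.one_sub_le_exp_neg (x - y), le_abs_self (x - y)]
    _ ≤ |x - y| := mul_le_of_le_one_left (abs_nonneg _) (Real.exp_le_one_iff.2 (neg_nonpos.2 hy))

variable {a l η : ℝ}

theorem abs_one_sub_inv_pow_sub_exp_le {k : ℕ} (ha : 1 < a) (hl : 0 ≤ l) (h : |k / a - l| ≤ η)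
    (h' : |k / (a - 1) - l| ≤ η) : |(1 - a⁻¹) ^ k - Real.exp (-l)| ≤ η := by
  have : 0 < a := zero_lt_one.trans ha
  have ha1 : 0 < a - 1 := sub_pos.2 ha
  have hp : 0 < 1 - a⁻¹ := sub_pos.2 (inv_lt_one_of_one_lt₀ ha)
  have hupper : (1 - a⁻¹) ^ k ≤ Real.exp (-(k / a)) :=
    calc (1 - a⁻¹) ^ k ≤ Real.exp (-a⁻¹) ^ k := by
          gcongr
          exact Real.one_sub_le_exp_neg _
      _ = Real.exp (-(k / a)) := by
          rw [← Real.exp_nat_mul]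
          ring_nf
  have hlower : Real.exp (-(k / (a - 1))) ≤ (1 - a⁻¹) ^ k := by
    have hlog := Real.one_sub_inv_le_log_of_pos hp
    rw [← Real.rpow_natCast, Real.rpow_def_of_pos hp]
    gcongr
    calc -(k / (a - 1)) = (1 - (1 - a⁻¹)⁻¹) * k := by
          have : 1 - a⁻¹ = (a - 1) / a := by field_simp
          rw [this]
          field_simp
          ring
      _ ≤ Real.log (1 - a⁻¹) * k := by gcongr
  rw [abs_le]
  constructor
  · linarith [exp_neg_sub_exp_neg_le (x := k / (a - 1)) hl]
  · linarith [exp_neg_sub_exp_neg_le (x := l) (y := k / a) (by positivity), abs_sub_comm l (k / a)]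

theorem abs_descFactorial_div_pow_sub_pow_le {N d : ℕ} (hd : d ≤ N) (ha : 0 < a)
    (hN : (N : ℝ) ≤ a) (hl : 0 ≤ l) (hl1 : l ≤ 1) (h : |N / a - l| ≤ η)
    (h' : |(N - d : ℕ) / a - l| ≤ η) : |N.descFactorial d / a ^ d - l ^ d| ≤ d * η := by
  have hpow {x : ℝ} (hx : 0 ≤ x) (hxN : x ≤ N) (hxη : |x / a - l| ≤ η) :
      |(x / a) ^ d - l ^ d| ≤ d * η := by
    have hx1 : x / a ≤ 1 := (div_le_one ha).2 (hxN.trans hN)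
    have hmax : max |x / a| |l| ≤ 1 := by
      rw [abs_of_nonneg hl, abs_of_nonneg (by positivity)]
      exact max_le hx1 hl1
    calc |(x / a) ^ d - l ^ d| ≤ |x / a - l| * d * max |x / a| |l| ^ (d - 1) :=
          abs_pow_sub_pow_le _ _ _
      _ ≤ η * d * 1 := by
          have hη : 0 ≤ η := (abs_nonneg _).trans h
          gcongr
          exact pow_le_one₀ (by positivity) hmax
      _ = d * η := by ring
  have hupper : N.descFactorial d / a ^ d ≤ (N / a) ^ d := by
    rw [div_pow]
    gcongr
    exact_mod_cast Nat.descFactorial_le_pow N d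
  have hlower : ((N - d : ℕ) / a) ^ d ≤ N.descFactorial d / a ^ d := by
    rw [div_pow]
    gcongr
    exact_mod_cast (Nat.pow_le_pow_left (by omega) d).trans (Nat.pow_sub_le_descFactorial N d)
  have hN := hpow (by positivity) le_rfl h
  have hNd := hpow (by positivity) (Nat.cast_le.2 (Nat.sub_le N d)) h'
  rw [abs_le] at hN hNd ⊢
  constructor <;> linarith

theorem abs_choose_mul_bernoulliWeight_sub_poissonWeight_le {N d : ℕ} (hd : d ≤ N) (ha : 1 < a)
    (hN : (N : ℝ) ≤ a) (hl : 0 ≤ l) (hl1 : l ≤ 1) (h : |N / a - l| ≤ η)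
    (h' : |(N - d : ℕ) / a - l| ≤ η) (h'' : |(N - d : ℕ) / (a - 1) - l| ≤ η) :
    |N.choose d * bernoulliWeight a⁻¹ N d - poissonWeight l d| ≤ (d + 1) * η := by
  have : 0 ≤ η := (abs_nonneg _).trans h
  have ha0 : 0 < a := zero_lt_one.trans ha
  have hp : 0 ≤ 1 - a⁻¹ := sub_nonneg.2 (inv_le_one_of_one_le₀ ha.le)
  have hdesc := abs_descFactorial_div_pow_sub_pow_le hd ha0 hN hl hl1 h h'
  have hexp := abs_one_sub_inv_pow_sub_exp_le ha hl h' h''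
  have hfac : (1 : ℝ) ≤ d.factorial := Nat.one_le_cast.2 d.factorial_pos
  have hsplit : N.choose d * bernoulliWeight a⁻¹ N d - poissonWeight l d =
      ((N.descFactorial d / a ^ d - l ^ d) * (1 - a⁻¹) ^ (N - d) +
        l ^ d * ((1 - a⁻¹) ^ (N - d) - Real.exp (-l))) / d.factorial := by
    rw [Nat.descFactorial_eq_factorial_mul_choose, bernoulliWeight, poissonWeight]
    push_cast
    rw [inv_pow]
    field_simp
    ring
  rw [hsplit, abs_div, abs_of_pos (zero_lt_one.trans_le hfac)]
  refine (div_le_self (abs_nonneg _) hfac).trans <| (abs_add_le _ _).trans ?_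
  rw [abs_mul, abs_mul, abs_of_nonneg (pow_nonneg hp _), abs_of_nonneg (pow_nonneg hl d), add_mul,
    one_mul]
  refine add_le_add ?_ ?_
  · exact (mul_le_of_le_one_right (abs_nonneg _)
      (pow_le_one₀ hp (sub_le_self _ (by positivity)))).trans hdesc
  · exact (mul_le_of_le_one_left (abs_nonneg _) (pow_le_one₀ hl hl1)).trans hexp

end BinomialPoisson

section Collision

variable {κ β : Type*} [Fintype κ] [DecidableEq κ] [Fintype β] [DecidableEq β]

theorem descFactorial_le_card_filter_card_union_image_eq (B : Finset β) :
    (Fintype.card β - #B).descFactorial (Fintype.card κ) ≤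
      #{g : κ → β | #(B ∪ univ.image g) = #B + Fintype.card κ} := by
  have hcard : Fintype.card (κ ↪ {b // b ∉ B}) =
      (Fintype.card β - #B).descFactorial (Fintype.card κ) := by
    simp [Fintype.card_embedding_eq, Fintype.card_subtype_compl]
  rw [← hcard, ← card_univ]
  refine card_le_card_of_injOn (fun f x => (f x : β)) (fun f _ => ?_) fun f _ f' _ h => ?_
  · have hdisj : Disjoint B (univ.image fun x => (f x : β)) := by
      simpa [disjoint_right] using fun x => (f x).2
    have hinj : Function.Injective fun x => (f x : β) := Subtype.val_injective.comp f.injective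
    simp [card_union_of_disjoint hdisj, card_image_of_injective univ hinj]
  · ext x
    exact congrFun h x

variable [Nonempty β]

theorem expect_card_union_image_ne_le {B : Finset β}
    (hB : #B + Fintype.card κ ≤ Fintype.card β) :
    𝔼 g : κ → β, (if #(B ∪ univ.image g) = #B + Fintype.card κ then 0 else 1 : ℝ) ≤
      Fintype.card κ * (#B + Fintype.card κ : ℕ) / Fintype.card β := by
  set b := Fintype.card β
  set k := Fintype.card κ
  have hb : (0 : ℝ) < b := Nat.cast_pos.2 Fintype.card_pos
  have hgood : ((b - (#B + k) : ℕ) : ℝ) ^ k ≤ #{g : κ → β | #(B ∪ univ.image g) = #B + k} := by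
    rw [← Nat.sub_sub]
    exact_mod_cast (Nat.pow_le_pow_left (by omega) k).trans
      ((Nat.pow_sub_le_descFactorial _ _).trans
        (descFactorial_le_card_filter_card_union_image_eq B))
  have hbernoulli : 1 - k * (#B + k : ℕ) / b ≤ ((b - (#B + k) : ℕ) / b : ℝ) ^ k :=
    calc 1 - k * (#B + k : ℕ) / b = 1 + k * (-((#B + k : ℕ) / b) : ℝ) := by ring
      _ ≤ (1 + -((#B + k : ℕ) / b)) ^ k := by
          refine one_add_mul_le_pow ?_ k
          linarith [(div_le_one hb).2 (Nat.cast_le (α := ℝ).2 hB)]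
      _ = ((b - (#B + k) : ℕ) / b : ℝ) ^ k := by
          rw [Nat.cast_sub hB, sub_div, div_self hb.ne', sub_eq_add_neg]
  have hmean : 𝔼 g : κ → β, (if #(B ∪ univ.image g) = #B + k then 0 else 1 : ℝ) =
      1 - #{g : κ → β | #(B ∪ univ.image g) = #B + k} / (b : ℝ) ^ k := by
    rw [show (b : ℝ) ^ k = Fintype.card (κ → β) by simp [b, k], ← sum_boole,
      ← Fintype.expect_eq_sum_div_card, ← Fintype.expect_const (ι := κ → β) (1 : ℝ),
      ← expect_sub_distrib]
    refine expect_congr rfl fun g _ => ?_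
    split_ifs <;> simp
  rw [hmean]
  rw [div_pow] at hbernoulli
  linarith [div_le_div_of_nonneg_right hgood (pow_nonneg hb.le k)]

theorem abs_expect_sub_le_of_card_union_image_eq {B : Finset β}
    (hB : #B + Fintype.card κ ≤ Fintype.card β) {X : (κ → β) → ℝ} {x c : ℝ} (hc : 0 ≤ c)
    (hX : ∀ g, X g ∈ Set.Icc 0 1) (hx : x ∈ Set.Icc (0 : ℝ) 1)
    (h : ∀ g, #(B ∪ univ.image g) = #B + Fintype.card κ → |X g - x| ≤ c) :
    |𝔼 g, X g - x| ≤ c + Fintype.card κ * (#B + Fintype.card κ : ℕ) / Fintype.card β :=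
  calc |𝔼 g, X g - x| = |𝔼 g, (X g - x)| := by
        rw [expect_sub_distrib, Fintype.expect_const]
    _ ≤ 𝔼 g, |X g - x| := abs_expect_le _ _
    _ ≤ 𝔼 g : κ → β, (c + if #(B ∪ univ.image g) = #B + Fintype.card κ then 0 else 1) := by
        refine expect_le_expect fun g _ => ?_
        split_ifs with hg
        · simpa using h g hg
        · exact (abs_sub_le_of_nonneg_of_le (hX g).1 (hX g).2 hx.1 hx.2).trans
            (le_add_of_nonneg_left hc)
    _ ≤ _ := by
        rw [expect_add_distrib, Fintype.expect_const]
        gcongr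
        exact expect_card_union_image_ne_le hB

end Collision

section Approximation

/-- An exploration that started with `n` items and `m` vertices on each side, has `N` items and
`a`, `b` vertices left, and is to explore `q` more vertices and find `j` more items, deletes at
most `J` items and at most `J` vertices on each side altogether. -/
structure IsWithinBudget (n m J N a b q j : ℕ) : Prop where
  budget_pos : 0 < J
  budget_le_items : J ≤ n
  items_add_budget_le : n + J ≤ m
  items_le : N ≤ n
  le_items : n + j ≤ N + J
  left_le : a ≤ m
  le_left : m + (q + j) ≤ a + J
  right_le : b ≤ m
  le_right : m + (q + j) ≤ b + J

namespace IsWithinBudget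

variable {n m J N a b q j : ℕ}

theorem symm (h : IsWithinBudget n m J N a b q j) : IsWithinBudget n m J N b a q j :=
  { h with
    left_le := h.right_le
    le_left := h.le_right
    right_le := h.left_le
    le_right := h.le_left }

theorem step {N' a' q' d : ℕ} (h : IsWithinBudget n m J N a b q j) (hd : d ≤ j)
    (hN : N' + d = N) (ha : a' + 1 = a) (hq : q' + 1 = q + d) :
    IsWithinBudget n m J N' a' b q' (j - d) := by
  obtain ⟨_, _, _, _, _, _, _, _, _⟩ := h
  constructor <;> omega

theorem abs_choose_mul_bernoulliWeight_sub_poissonWeight_le {d : ℕ}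
    (h : IsWithinBudget n m J N a b (q + 1) j) (hd : d ≤ j) :
    |N.choose d * bernoulliWeight (a : ℝ)⁻¹ N d - poissonWeight (n / m) d| ≤
      2 * J ^ 2 / m := by
  obtain ⟨_, hJn, hnm, hN, hjN, ha, hja, -, -⟩ := h
  have hdN : d ≤ N := by omega
  have hm : (0 : ℝ) < m := by norm_cast; omega
  have hsub : ((N - d : ℕ) : ℝ) = N - d := Nat.cast_sub hdN
  have hclose {x y : ℝ} := abs_div_sub_div_le (n := n) (J := J) (x := x) (y := y) hm
    (Nat.cast_nonneg n) (by norm_cast; omega) (by norm_cast; omega)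
  have hnm' : (n : ℝ) + J ≤ m := mod_cast hnm
  have hN' : (N : ℝ) ≤ n := mod_cast hN
  have hdN' : (n : ℝ) + d ≤ N + J := by norm_cast; omega
  have ha' : (a : ℝ) ≤ m := mod_cast ha
  have hja' : (m : ℝ) + 1 ≤ a + J := by norm_cast; omega
  have : (0 : ℝ) ≤ d := Nat.cast_nonneg d
  have ha1 : (1 : ℝ) < a := by norm_cast; omega
  have hNa : (N : ℝ) ≤ a := by linarith
  calc |N.choose d * bernoulliWeight (a : ℝ)⁻¹ N d - poissonWeight (n / m) d|
      ≤ (d + 1) * (2 * J / m) := by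
        refine _root_.abs_choose_mul_bernoulliWeight_sub_poissonWeight_le hdN ha1 hNa
          (by positivity) ((div_le_one hm).2 (by linarith)) (hclose ?_ ?_ ?_ ?_)
          (hclose ?_ ?_ ?_ ?_) (hclose ?_ ?_ ?_ ?_) <;> linarith
    _ ≤ J * (2 * J / m) := by
        gcongr
        norm_cast
        omega
    _ = 2 * J ^ 2 / m := by ring

theorem mul_div_le {d B : ℕ} (h : IsWithinBudget n m J N a b q j) (hB : B + d ≤ q + j) :
    (d * (B + d : ℕ) / b : ℝ) ≤ 2 * J ^ 2 / m := by
  obtain ⟨_, hJn, hnm, -, -, ha, hja, -, hb⟩ := h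
  have hb0 : 0 < b := by omega
  have hm0 : 0 < m := by omega
  have hdJ : d ≤ J := by omega
  have hBJ : B + d ≤ J := by omega
  have hmb : (m : ℝ) ≤ 2 * b := by norm_cast; omega
  rw [div_le_div_iff₀ (Nat.cast_pos.2 hb0) (Nat.cast_pos.2 hm0)]
  calc (d * (B + d : ℕ) * m : ℝ) ≤ J * J * (2 * b) := by gcongr
    _ = 2 * J ^ 2 * b := by ring

end IsWithinBudget

variable {ι : Type*} [Fintype ι]

theorem sum_bernoulliWeight_card_mul {f : ℕ → ℝ} {j : ℕ} (p : ℝ) (hj : j ≤ Fintype.card ι)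
    (hf : ∀ d, j < d → f d = 0) :
    ∑ D : Finset ι, bernoulliWeight p (Fintype.card ι) #D * f #D =
      ∑ d ∈ range (j + 1), (Fintype.card ι).choose d * bernoulliWeight p (Fintype.card ι) d *
        f d := by
  rw [← powerset_univ, sum_powerset_apply_card
    fun d => bernoulliWeight p (Fintype.card ι) d * f d, card_univ]
  refine (sum_subset (range_subset_range.2 (by omega)) fun d _ hd => ?_).symm.trans
    (sum_congr rfl fun d _ => by rw [nsmul_eq_mul, mul_assoc])
  rw [hf d (by simpa [Nat.lt_succ_iff] using hd), mul_zero, smul_zero]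

theorem abs_sum_bernoulliWeight_mul_borelTanner_sub_le {n m J a b q j : ℕ}
    (h : IsWithinBudget n m J (Fintype.card ι) a b (q + 1) j) :
    |∑ D : Finset ι, bernoulliWeight (a : ℝ)⁻¹ (Fintype.card ι) #D *
        (if #D ≤ j then borelTanner (n / m) (q + #D) (j - #D) else 0) -
      borelTanner (n / m) (q + 1) j| ≤ 2 * J ^ 3 / m := by
  have hl : (0 : ℝ) ≤ n / m := by positivity
  have hj : j ≤ Fintype.card ι := by have := h.budget_le_items; have := h.le_items; omega
  have hjJ : j + 1 ≤ J := by have := h.left_le; have := h.le_left; omega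
  rw [sum_bernoulliWeight_card_mul (f := fun d =>
      if d ≤ j then borelTanner (n / m) (q + d) (j - d) else 0) _ hj
    fun _ hd => if_neg hd.not_ge, borelTanner_succ, ← sum_sub_distrib]
  calc _ ≤ ∑ d ∈ range (j + 1), (2 * J ^ 2 / m : ℝ) := by
        refine (abs_sum_le_sum_abs _ _).trans (sum_le_sum fun d hd => ?_)
        have hdj : d ≤ j := mem_range_succ_iff.1 hd
        rw [if_pos hdj, ← sub_mul, abs_mul, abs_of_nonneg (borelTanner_nonneg hl _ _)]
        exact (mul_le_of_le_one_right (abs_nonneg _) (borelTanner_le_one hl _ _)).trans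
          (h.abs_choose_mul_bernoulliWeight_sub_poissonWeight_le hdj)
    _ = (j + 1 : ℕ) * (2 * J ^ 2 / m) := by rw [sum_const, card_range, nsmul_eq_mul]
    _ ≤ J * (2 * J ^ 2 / m) := by gcongr
    _ = 2 * J ^ 3 / m := by ring

theorem abs_sum_mul_sub_sum_mul_le {w x y : ι → ℝ} {c : ℝ} (hw : ∀ i, 0 ≤ w i)
    (hw1 : ∑ i, w i = 1) (h : ∀ i, |x i - y i| ≤ c) :
    |∑ i, w i * x i - ∑ i, w i * y i| ≤ c :=
  calc |∑ i, w i * x i - ∑ i, w i * y i| = |∑ i, w i * (x i - y i)| := by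
        simp only [mul_sub, sum_sub_distrib]
    _ ≤ ∑ i, w i * c := (abs_sum_le_sum_abs _ _).trans <| sum_le_sum fun i _ => by
        rw [abs_mul, abs_of_nonneg (hw i)]
        exact mul_le_mul_of_nonneg_left (h i) (hw i)
    _ = c := by rw [← sum_mul, hw1, one_mul]

universe v

variable {α β : Type v} [DecidableEq ι] [Fintype α] [Fintype β] {A : Finset α} {B : Finset β}

theorem explorationMean_indicator_mem_Icc (p : ℕ → Prop) [DecidablePred p] :
    explorationMean ι A B (fun e => if p e then 1 else 0) ∈ Set.Icc 0 1 := by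
  have h (e : ℕ) : (if p e then 1 else 0 : ℝ) ∈ Set.Icc 0 1 := by
    split_ifs <;> simp
  exact ⟨expect_nonneg fun _ _ => expect_nonneg fun _ _ => (h _).1,
    explorationMean_le_of_nonneg zero_le_one fun e => (h e).2⟩

variable {n m J q j : ℕ} {c : ℝ}

theorem abs_expect_explorationMean_sub_borelTanner_le [DecidableEq β] {a : ℕ} (hq : #B ≤ q + 1)
    (h : IsWithinBudget n m J (Fintype.card ι) a (Fintype.card β) (q + 1) j)
    (hc : 0 ≤ c) {D : Finset ι} (hD : #D ≤ j)
    (ih : ∀ g : {x // x ∈ D} → β, #(B ∪ univ.image g) = #B + #D →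
      |explorationMean {x // x ∉ D} A (B ∪ univ.image g) (fun e => if e = j - #D then 1 else 0) -
        borelTanner (n / m) (q + #D) (j - #D)| ≤ c) :
    |(𝔼 g : {x // x ∈ D} → β, explorationMean {x // x ∉ D} A (B ∪ univ.image g) fun e =>
        if #D + e = j then 1 else 0) - borelTanner (n / m) (q + #D) (j - #D)| ≤
      c + 2 * J ^ 2 / m := by
  have hl : (0 : ℝ) ≤ n / m := by positivity
  have hiff (e : ℕ) : #D + e = j ↔ e = j - #D := by omega
  have hcard : Fintype.card {x // x ∈ D} = #D := Fintype.card_coe D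
  obtain ⟨hB, hβ⟩ : #B + #D ≤ Fintype.card β ∧ 0 < Fintype.card β := by
    obtain ⟨_, _, _, _, _, _, _, _, _⟩ := h
    omega
  have : Nonempty β := Fintype.card_pos_iff.1 hβ
  have hexpect := abs_expect_sub_le_of_card_union_image_eq (κ := {x // x ∈ D}) (B := B)
    (X := fun g => explorationMean {x // x ∉ D} A (B ∪ univ.image g) fun e =>
      if e = j - #D then 1 else 0) (x := borelTanner (n / m) (q + #D) (j - #D))
    (hcard ▸ hB) hc (fun g => explorationMean_indicator_mem_Icc _)
    ⟨borelTanner_nonneg hl _ _, borelTanner_le_one hl _ _⟩ (hcard ▸ ih)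
  rw [hcard] at hexpect
  simp only [hiff]
  exact hexpect.trans (add_le_add_right (h.mul_div_le (by omega)) c)

/-- One exploration step. The errors are those of treating the newly found vertices as distinct
and the degree of `u` as Poisson. -/
theorem abs_explorationMean_sub_borelTanner_le_of_step [DecidableEq α] [DecidableEq β] {u : α}
    (hu : u ∈ A) (hq : #A + #B = q + 1)
    (h : IsWithinBudget n m J (Fintype.card ι) (Fintype.card α) (Fintype.card β) (q + 1) j)
    (hc : 0 ≤ c)
    (ih : ∀ D : Finset ι, #D ≤ j → ∀ g : {x // x ∈ D} → β, #(B ∪ univ.image g) = #B + #D →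
      |explorationMean {x // x ∉ D} (A.subtype (· ≠ u)) (B ∪ univ.image g)
          (fun e => if e = j - #D then 1 else 0) - borelTanner (n / m) (q + #D) (j - #D)| ≤ c) :
    |explorationMean ι A B (fun e => if e = j then 1 else 0) - borelTanner (n / m) (q + 1) j| ≤
      c + 4 * J ^ 3 / m := by
  have hw1 : ∑ D : Finset ι, bernoulliWeight (Fintype.card α : ℝ)⁻¹ (Fintype.card ι) #D = 1 := by
    simpa using sum_bernoulliWeight_mul_pow (ι := ι) (Fintype.card α : ℝ)⁻¹ 1
  have hstep (D : Finset ι) :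
      |(𝔼 g : {x // x ∈ D} → β, explorationMean {x // x ∉ D} (A.subtype (· ≠ u))
          (B ∪ univ.image g) fun e => if #D + e = j then 1 else 0) -
        if #D ≤ j then borelTanner (n / m) (q + #D) (j - #D) else 0| ≤ c + 2 * J ^ 2 / m := by
    split_ifs with hD
    · exact abs_expect_explorationMean_sub_borelTanner_le (by omega) h hc hD (ih D hD)
    · have hne (e : ℕ) : #D + e ≠ j := by omega
      simp only [hne, if_false, explorationMean, expect_const_zero, sub_zero, abs_zero]
      positivity
  have hbernoulli := abs_sum_mul_sub_sum_mul_le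
    (fun D => bernoulliWeight_nonneg (by positivity) (Nat.cast_inv_le_one _) _ #D) hw1 hstep
  have hpoisson := abs_sum_bernoulliWeight_mul_borelTanner_sub_le h
  rw [explorationMean_eq_sum hu]
  calc _ ≤ c + 2 * J ^ 2 / m + 2 * J ^ 3 / m :=
        (abs_sub_le _ _ _).trans (add_le_add hbernoulli hpoisson)
    _ ≤ c + 2 * J ^ 3 / m + 2 * J ^ 3 / m := by
        have : (1 : ℝ) ≤ J := Nat.one_le_cast.2 h.budget_pos
        gcongr
        norm_num
    _ = c + 4 * J ^ 3 / m := by ring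

theorem abs_explorationMean_sub_borelTanner_le
    (h : IsWithinBudget n m J (Fintype.card ι) (Fintype.card α) (Fintype.card β) (#A + #B) j) :
    |explorationMean ι A B (fun e => if e = j then 1 else 0) -
        borelTanner (n / m) (#A + #B) j| ≤ (#A + #B + j : ℕ) * (4 * J ^ 3 / m) := by
  induction hs : #A + #B + j using Nat.strong_induction_on generalizing ι α β j with
  | _ s ih =>
    wlog hA : A.Nonempty generalizing α β
    · rcases B.eq_empty_or_nonempty with rfl | hB
      · obtain rfl := not_nonempty_iff_eq_empty.1 hA
        obtain ⟨_, _, _, _, _, _, _, _, _⟩ := h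
        have : Nonempty α := Fintype.card_pos_iff.1 (by omega)
        have : Nonempty β := Fintype.card_pos_iff.1 (by omega)
        rw [explorationMean_empty, card_empty, card_empty, borelTanner_zero]
        simp only [eq_comm (a := 0), sub_self, abs_zero]
        positivity
      · rw [← explorationMean_swap, add_comm #A]
        rw [add_comm #A] at h hs
        exact this h.symm hs hB
    obtain ⟨u, hu⟩ := hA
    have hA := card_subtype_ne_add_one hu
    obtain ⟨q, hq⟩ : ∃ q, #A + #B = q + 1 := ⟨#(A.subtype (· ≠ u)) + #B, by omega⟩
    rw [hq] at h ⊢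
    refine (abs_explorationMean_sub_borelTanner_le_of_step hu hq h
      (c := (q + j : ℕ) * (4 * J ^ 3 / m)) (by positivity) fun D hD g hg => ?_).trans_eq ?_
    · have hcard : #(A.subtype (· ≠ u)) + #(B ∪ univ.image g) = q + #D := by omega
      have hbudget := h.step hD (card_notMem_add_card D) (card_ne_add_one u)
        (q' := q + #D) (by omega)
      rw [← hcard] at hbudget ⊢
      exact (ih _ (by omega) hbudget rfl).trans_eq (by rw [hcard]; congr 2; omega)
    · rw [← hs, hq]
      push_cast
      ring

end Approximation

section CuckooGraph

variable {n m : ℕ} {h₀ h₁ : Fin n → Fin m} {u v w : Fin m ⊕ Fin m}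

theorem cuckooConn.symm (h : cuckooConn n m h₀ h₁ u v) : cuckooConn n m h₀ h₁ v u :=
  Relation.EqvGen.symm _ _ h

theorem cuckooConn.trans (h : cuckooConn n m h₀ h₁ u v) (h' : cuckooConn n m h₀ h₁ v w) :
    cuckooConn n m h₀ h₁ u w :=
  Relation.EqvGen.trans _ _ _ h h'

theorem cuckooConn_inl_inr (h₀ h₁ : Fin n → Fin m) (x : Fin n) :
    cuckooConn n m h₀ h₁ (Sum.inl (h₀ x)) (Sum.inr (h₁ x)) :=
  Relation.EqvGen.rel _ _ ⟨x, rfl, rfl⟩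

theorem cuckooConn_inl_iff_cuckooConn_inr (x : Fin n) :
    cuckooConn n m h₀ h₁ (Sum.inl (h₀ x)) v ↔ cuckooConn n m h₀ h₁ (Sum.inr (h₁ x)) v :=
  ⟨(cuckooConn_inl_inr h₀ h₁ x).symm.trans, (cuckooConn_inl_inr h₀ h₁ x).trans⟩

theorem cuckooConn.iff_of_forall_edge {P : Fin m ⊕ Fin m → Prop}
    (h : cuckooConn n m h₀ h₁ u v) (hP : ∀ x, P (Sum.inl (h₀ x)) ↔ P (Sum.inr (h₁ x))) :
    P u ↔ P v := by
  induction h with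
  | rel _ _ hab =>
    obtain ⟨x, rfl, rfl⟩ := hab
    exact hP x
  | refl => exact Iff.rfl
  | symm _ _ _ ih => exact ih.symm
  | trans _ _ _ _ _ ih₁ ih₂ => exact ih₁.trans ih₂

theorem cuckooConn_inl_iff_isReachable (x : Fin n) :
    cuckooConn n m h₀ h₁ (Sum.inl (h₀ x)) v ↔
      IsReachable h₀ h₁ (({v} : Finset (Fin m ⊕ Fin m)).toLeft : Set (Fin m))
        ({v} : Finset (Fin m ⊕ Fin m)).toRight x := by
  constructor
  · intro h S T hST hS hT
    refine (h.iff_of_forall_edge (P := Sum.elim (· ∈ S) (· ∈ T)) hST).2 ?_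
    rcases v with a | b
    · exact hS (by simp)
    · exact hT (by simp)
  · intro h
    refine h {a | cuckooConn n m h₀ h₁ (Sum.inl a) v} {b | cuckooConn n m h₀ h₁ (Sum.inr b) v}
      (fun _ => cuckooConn_inl_iff_cuckooConn_inr _) (fun a ha => ?_) fun b hb => ?_
    · obtain rfl : Sum.inl a = v := by simpa using ha
      exact Relation.EqvGen.refl _
    · obtain rfl : Sum.inr b = v := by simpa using hb
      exact Relation.EqvGen.refl _

theorem cuckooC_eq_card_filter (h₀ h₁ : Fin n → Fin m) (v : Fin m ⊕ Fin m) :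
    cuckooC n m h₀ h₁ v = #{x | cuckooConn n m h₀ h₁ (Sum.inl (h₀ x)) v} := by
  rw [cuckooC, Nat.card_eq_fintype_card, Fintype.card_subtype]

theorem cuckooC_eq_reachCount (h₀ h₁ : Fin n → Fin m) (v : Fin m ⊕ Fin m) :
    cuckooC n m h₀ h₁ v =
      reachCount h₀ h₁ ({v} : Finset (Fin m ⊕ Fin m)).toLeft
        ({v} : Finset (Fin m ⊕ Fin m)).toRight := by
  simp only [cuckooC_eq_card_filter, reachCount, cuckooConn_inl_iff_isReachable]

theorem natCast_natCard_subtype {V : Type*} [Fintype V] (p : V → Prop) [DecidablePred p] :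
    (Nat.card {v // p v} : ℝ) = ∑ v, if p v then 1 else 0 := by
  rw [Nat.card_eq_fintype_card, Fintype.card_subtype, natCast_card_filter]

theorem cuckooE_eq_expect (f : HashPair n m → ℝ) : cuckooE n m f = 𝔼 ω, f ω := by
  rw [Fintype.expect_eq_sum_div_card, cuckooE, Nat.card_eq_fintype_card]

theorem cuckooPr_eq_expect (P : HashPair n m → Prop) :
    cuckooPr n m P = 𝔼 ω, if P ω then 1 else 0 := by
  rw [Fintype.expect_eq_sum_div_card, cuckooPr, natCast_natCard_subtype, Nat.card_eq_fintype_card]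

theorem cuckooPr_exists_le_sum {V : Type*} [Fintype V] (P : HashPair n m → V → Prop)
    [∀ ω, DecidablePred (P ω)] :
    cuckooPr n m (fun ω => ∃ v, P ω v) ≤ ∑ v, 𝔼 ω, if P ω v then 1 else 0 := by
  rw [cuckooPr_eq_expect, ← expect_sum_comm]
  refine expect_le_expect fun ω _ => ?_
  have hnonneg (v : V) : (0 : ℝ) ≤ if P ω v then 1 else 0 := by split_ifs <;> simp
  split_ifs with h
  · obtain ⟨v, hv⟩ := h
    simpa [hv] using single_le_sum (fun v _ => hnonneg v) (mem_univ v)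
  · exact sum_nonneg fun v _ => hnonneg v

theorem expect_cuckooC (v : Fin m ⊕ Fin m) (F : ℕ → ℝ) :
    𝔼 ω : HashPair n m, F (cuckooC n m ω.1 ω.2 v) =
      explorationMean (Fin n) ({v} : Finset (Fin m ⊕ Fin m)).toLeft
        ({v} : Finset (Fin m ⊕ Fin m)).toRight F := by
  simp only [cuckooC_eq_reachCount]
  exact expect_product' univ univ
    fun h₀ h₁ : Fin n → Fin m => F (reachCount h₀ h₁ ({v} : Finset (Fin m ⊕ Fin m)).toLeft _)

theorem abs_expect_cuckooC_eq_sub_borelTanner_le {J j : ℕ} (hj : j + 1 ≤ J) (hJ : J ≤ n)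
    (hnm : n + J ≤ m) (v : Fin m ⊕ Fin m) :
    |(𝔼 ω : HashPair n m, if cuckooC n m ω.1 ω.2 v = j then 1 else 0) -
        borelTanner (n / m) 1 j| ≤ 4 * J ^ 4 / m := by
  have hcard : #({v} : Finset (Fin m ⊕ Fin m)).toLeft + #({v} : Finset (Fin m ⊕ Fin m)).toRight =
      1 := by rw [card_toLeft_add_card_toRight, card_singleton]
  have hbudget : IsWithinBudget n m J n m m 1 j := by constructor <;> omega
  have h := abs_explorationMean_sub_borelTanner_le (n := n) (m := m) (J := J) (j := j)
    (ι := Fin n) (A := ({v} : Finset (Fin m ⊕ Fin m)).toLeft)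
    (B := ({v} : Finset (Fin m ⊕ Fin m)).toRight) (by simpa only [hcard, Fintype.card_fin])
  rw [hcard] at h
  rw [expect_cuckooC v fun e => if e = j then 1 else 0]
  calc _ ≤ ((1 + j : ℕ) : ℝ) * (4 * J ^ 3 / m) := h
    _ ≤ J * (4 * J ^ 3 / m) := by
        gcongr
        omega
    _ = 4 * J ^ 4 / m := by ring

theorem abs_expect_cuckooX_sub_le {J j : ℕ} (hj : j + 1 ≤ J) (hJ : J ≤ n) (hnm : n + J ≤ m) :
    |𝔼 ω : HashPair n m, (cuckooX n m ω.1 ω.2 j : ℝ) - 2 * m * borelTanner (n / m) 1 j| ≤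
      8 * J ^ 4 := by
  have hm : (m : ℝ) ≠ 0 := by norm_cast; omega
  have hsum (x : ℝ) : ∑ _v : Fin m ⊕ Fin m, x = 2 * m * x := by
    simp [two_mul]
  simp only [cuckooX, natCast_natCard_subtype]
  rw [expect_sum_comm, mul_assoc, ← mul_assoc, ← hsum, ← sum_sub_distrib]
  calc _ ≤ ∑ _v : Fin m ⊕ Fin m, (4 * J ^ 4 / m : ℝ) :=
        (abs_sum_le_sum_abs _ _).trans <|
          sum_le_sum fun v _ => abs_expect_cuckooC_eq_sub_borelTanner_le hj hJ hnm v
    _ = 8 * J ^ 4 := by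
        rw [hsum]
        field_simp
        ring

theorem cuckooPr_exists_le_cuckooC_le {i : ℕ} {μ y z : ℝ} (hμ : 0 < μ) (hy : 1 ≤ y) (hz : 1 < z)
    (hexp : Real.exp ((z * y - 1) * μ) ≤ y) (hi : i ≠ 0) (hm : 2 * (1 + i) ≤ m)
    (hn : n ≤ μ * (m - (1 + i : ℕ))) :
    cuckooPr n m (fun ω => ∃ v, i ≤ cuckooC n m ω.1 ω.2 v) ≤
      4 * (y - 1) / μ * n / (z ^ i - 1) := by
  have hm0 : (0 : ℝ) < m := by norm_cast; omega
  have hm2 : (2 * (1 + i : ℕ) : ℝ) ≤ m := mod_cast hm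
  have hm' : 0 < μ * (m - (1 + i : ℕ)) := mul_pos hμ (by linarith)
  set t := n / (μ * (m - (1 + i : ℕ)))
  have hzi : 0 < z ^ i - 1 := sub_pos.2 (one_lt_pow₀ hz hi)
  have htail (v : Fin m ⊕ Fin m) :
      (𝔼 ω : HashPair n m, if i ≤ cuckooC n m ω.1 ω.2 v then 1 else 0) ≤
        t * (y - 1) / (z ^ i - 1) := by
    have : NeZero m := ⟨by omega⟩
    have ht : (Fintype.card (Fin n) : ℝ) ≤ t * μ * (Fintype.card (Fin m) - (1 + i : ℕ)) := by
      rw [Fintype.card_fin, Fintype.card_fin, mul_assoc, div_mul_cancel₀ _ hm'.ne']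
    rw [expect_cuckooC v fun e => if i ≤ e then 1 else 0]
    exact explorationMean_tail_le_of_load_le hμ.le hy hz hi hexp (by positivity)
      ((div_le_one hm').2 hn) (by rw [card_toLeft_add_card_toRight, card_singleton]) ht ht
  have ht : 2 * m * t ≤ 4 * n / μ := by
    rw [mul_div_assoc', div_le_div_iff₀ hm' hμ]
    nlinarith [mul_nonneg (Nat.cast_nonneg (α := ℝ) n) hμ.le]
  calc cuckooPr n m (fun ω => ∃ v, i ≤ cuckooC n m ω.1 ω.2 v)
      ≤ ∑ v, 𝔼 ω : HashPair n m, if i ≤ cuckooC n m ω.1 ω.2 v then 1 else 0 :=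
        cuckooPr_exists_le_sum _
    _ ≤ ∑ _v : Fin m ⊕ Fin m, t * (y - 1) / (z ^ i - 1) := sum_le_sum fun v _ => htail v
    _ = 2 * m * t * (y - 1) / (z ^ i - 1) := by
        simp
        ring
    _ ≤ 4 * n / μ * (y - 1) / (z ^ i - 1) := by
        have := sub_nonneg.2 hy
        gcongr
    _ = 4 * (y - 1) / μ * n / (z ^ i - 1) := by ring

end CuckooGraph

section Lipschitz

variable {n m : ℕ} {h₀ h₁ g₀ g₁ : Fin n → Fin m} {u v : Fin m ⊕ Fin m}

theorem cuckooConn.exists_eq_of_cuckooC_ne_zero (hC : cuckooC n m h₀ h₁ v ≠ 0)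
    (hu : cuckooConn n m h₀ h₁ u v) : ∃ x, u = Sum.inl (h₀ x) ∨ u = Sum.inr (h₁ x) := by
  rw [cuckooC_eq_card_filter, card_ne_zero] at hC
  obtain ⟨x, hx⟩ := hC
  exact ((hu.trans (mem_filter.1 hx).2.symm).iff_of_forall_edge
    (P := fun w => ∃ x, w = Sum.inl (h₀ x) ∨ w = Sum.inr (h₁ x))
    fun y => iff_of_true ⟨y, .inl rfl⟩ ⟨y, .inr rfl⟩).2 ⟨x, .inl rfl⟩

theorem cuckooV_le_two_mul_cuckooC (hC : cuckooC n m h₀ h₁ v ≠ 0) :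
    cuckooV n m h₀ h₁ v ≤ 2 * cuckooC n m h₀ h₁ v := by
  rw [cuckooV, Nat.card_eq_fintype_card, Fintype.card_subtype, cuckooC_eq_card_filter]
  set I : Finset (Fin n) := {x | cuckooConn n m h₀ h₁ (Sum.inl (h₀ x)) v}
  have hsub : ({u | cuckooConn n m h₀ h₁ u v} : Finset (Fin m ⊕ Fin m)) ⊆
      I.image (Sum.inl ∘ h₀) ∪ I.image (Sum.inr ∘ h₁) := by
    intro u hu
    obtain ⟨x, rfl | rfl⟩ := (mem_filter.1 hu).2.exists_eq_of_cuckooC_ne_zero hC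
    · exact mem_union_left _ (mem_image_of_mem _ (by simpa [I] using hu))
    · refine mem_union_right _ (mem_image_of_mem (Sum.inr ∘ h₁) ?_)
      simpa [I, cuckooConn_inl_iff_cuckooConn_inr] using hu
  calc _ ≤ #(I.image (Sum.inl ∘ h₀) ∪ I.image (Sum.inr ∘ h₁)) := card_le_card hsub
    _ ≤ #I + #I := (card_union_le _ _).trans (add_le_add card_image_le card_image_le)
    _ = 2 * #I := (two_mul _).symm

theorem cuckooConn.of_agree {x : Fin n} (hu : cuckooConn n m g₀ g₁ u v)
    (h₀g₀ : ∀ y ≠ x, h₀ y = g₀ y) (h₁g₁ : ∀ y ≠ x, h₁ y = g₁ y)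
    (hg₀ : ¬cuckooConn n m h₀ h₁ (Sum.inl (g₀ x)) v)
    (hg₁ : ¬cuckooConn n m h₀ h₁ (Sum.inr (g₁ x)) v) : cuckooConn n m h₀ h₁ u v := by
  refine (hu.iff_of_forall_edge (P := (cuckooConn n m h₀ h₁ · v)) fun y => ?_).2
    (Relation.EqvGen.refl v)
  rcases eq_or_ne y x with rfl | hy
  · exact iff_of_false hg₀ hg₁
  · rw [← h₀g₀ y hy, ← h₁g₁ y hy]
    exact cuckooConn_inl_iff_cuckooConn_inr y

theorem cuckooC_eq_of_agree {x : Fin n} (h₀g₀ : ∀ y ≠ x, h₀ y = g₀ y)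
    (h₁g₁ : ∀ y ≠ x, h₁ y = g₁ y) (hh : ¬cuckooConn n m h₀ h₁ (Sum.inl (h₀ x)) v)
    (hg₀ : ¬cuckooConn n m h₀ h₁ (Sum.inl (g₀ x)) v)
    (hg₁ : ¬cuckooConn n m h₀ h₁ (Sum.inr (g₁ x)) v) :
    cuckooC n m h₀ h₁ v = cuckooC n m g₀ g₁ v := by
  have of_g {u} (hu : cuckooConn n m g₀ g₁ u v) := hu.of_agree h₀g₀ h₁g₁ hg₀ hg₁
  have of_h {u} (hu : cuckooConn n m h₀ h₁ u v) : cuckooConn n m g₀ g₁ u v :=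
    hu.of_agree (fun y hy => (h₀g₀ y hy).symm) (fun y hy => (h₁g₁ y hy).symm)
      (fun h => hh (of_g h)) fun h => hh (cuckooConn_inl_iff_cuckooConn_inr x |>.2 (of_g h))
  simp only [cuckooC_eq_card_filter]
  refine congrArg card (filter_congr fun y _ => ?_)
  rcases eq_or_ne y x with rfl | hy
  · exact iff_of_false hh fun h => hg₀ (of_g h)
  · rw [h₀g₀ y hy]
    exact ⟨of_h, of_g⟩

/-- The vertices in components with at least `i` and fewer than `J` edges; their number is the
truncation of `X_*` to which the bounded differences inequality applies. -/
noncomputable def midsizeVertices (n m i J : ℕ) (h₀ h₁ : Fin n → Fin m) : Finset (Fin m ⊕ Fin m) :=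
  {v | i ≤ cuckooC n m h₀ h₁ v ∧ cuckooC n m h₀ h₁ v < J}

variable {i J : ℕ}

theorem mem_midsizeVertices :
    v ∈ midsizeVertices n m i J h₀ h₁ ↔ i ≤ cuckooC n m h₀ h₁ v ∧ cuckooC n m h₀ h₁ v < J := by
  simp [midsizeVertices]

theorem card_midsizeVertices (h₀ h₁ : Fin n → Fin m) (i J : ℕ) :
    #(midsizeVertices n m i J h₀ h₁) = ∑ j ∈ Ico i J, cuckooX n m h₀ h₁ j := by
  rw [card_eq_sum_card_fiberwise (f := cuckooC n m h₀ h₁) (t := Ico i J)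
    fun v hv => mem_coe.2 (mem_Ico.2 (mem_midsizeVertices.1 hv))]
  refine sum_congr rfl fun j hj => ?_
  rw [cuckooX, Nat.card_eq_fintype_card, Fintype.card_subtype]
  congr 1
  ext v
  simp only [mem_filter, mem_midsizeVertices, mem_univ, true_and, and_iff_right_iff_imp]
  rintro rfl
  exact mem_Ico.1 hj

theorem card_filter_midsizeVertices_cuckooConn_le (hi : i ≠ 0) (w : Fin m ⊕ Fin m) :
    #{v ∈ midsizeVertices n m i J h₀ h₁ | cuckooConn n m h₀ h₁ w v} ≤ 2 * J := by
  rcases eq_empty_or_nonempty {v ∈ midsizeVertices n m i J h₀ h₁ | cuckooConn n m h₀ h₁ w v}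
    with h | ⟨v, hv⟩
  · simp [h]
  obtain ⟨hv, hwv⟩ := mem_filter.1 hv
  obtain ⟨hiv, hvJ⟩ := mem_midsizeVertices.1 hv
  have hC := cuckooV_le_two_mul_cuckooC (h₀ := h₀) (h₁ := h₁) (v := v) (by omega)
  rw [cuckooV, Nat.card_eq_fintype_card, Fintype.card_subtype] at hC
  have hsub := card_le_card (s := {v ∈ midsizeVertices n m i J h₀ h₁ | cuckooConn n m h₀ h₁ w v})
    (t := {u | cuckooConn n m h₀ h₁ u v}) fun u hu =>
      mem_filter.2 ⟨mem_univ u, (mem_filter.1 hu).2.symm.trans hwv⟩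
  omega

theorem card_midsizeVertices_le_of_agree {x : Fin n} (hi : i ≠ 0) (h₀g₀ : ∀ y ≠ x, h₀ y = g₀ y)
    (h₁g₁ : ∀ y ≠ x, h₁ y = g₁ y) :
    #(midsizeVertices n m i J h₀ h₁) ≤ #(midsizeVertices n m i J g₀ g₁) + 6 * J := by
  let S w : Finset (Fin m ⊕ Fin m) :=
    {v ∈ midsizeVertices n m i J h₀ h₁ | cuckooConn n m h₀ h₁ w v}
  have hS w : #(S w) ≤ 2 * J := card_filter_midsizeVertices_cuckooConn_le hi w
  have hsub : midsizeVertices n m i J h₀ h₁ ⊆ midsizeVertices n m i J g₀ g₁ ∪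
      (S (Sum.inl (h₀ x)) ∪ (S (Sum.inl (g₀ x)) ∪ S (Sum.inr (g₁ x)))) := by
    intro v hv
    by_contra hv'
    simp only [S, mem_union, mem_filter, hv, true_and, not_or] at hv'
    obtain ⟨hvg, hh, hg₀, hg₁⟩ := hv'
    rw [mem_midsizeVertices, ← cuckooC_eq_of_agree h₀g₀ h₁g₁ hh hg₀ hg₁] at hvg
    exact hvg (mem_midsizeVertices.1 hv)
  calc _ ≤ _ := card_le_card hsub
    _ ≤ #(midsizeVertices n m i J g₀ g₁) + (2 * J + (2 * J + 2 * J)) := by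
        refine (card_union_le _ _).trans (add_le_add_right ((card_union_le _ _).trans ?_) _)
        exact add_le_add (hS _) ((card_union_le _ _).trans (add_le_add (hS _) (hS _)))
    _ = _ := by ring

end Lipschitz

section BoundedDifferences

variable {Ω : Type*} [Fintype Ω] {f : Ω → ℝ} {K : ℝ}

theorem abs_sub_expect_le (hf : ∀ a b, |f a - f b| ≤ K) (a : Ω) : |f a - 𝔼 b, f b| ≤ K := by
  have : Nonempty Ω := ⟨a⟩
  calc |f a - 𝔼 b, f b| = |𝔼 b, (f a - f b)| := by rw [expect_sub_distrib, Fintype.expect_const]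
    _ ≤ 𝔼 b, |f a - f b| := abs_expect_le _ _
    _ ≤ K := expect_le univ_nonempty fun b _ => hf a b

theorem expect_exp_mul_le [Nonempty Ω] (s : ℝ) (hf : ∀ a b, |f a - f b| ≤ K) :
    𝔼 a, Real.exp (s * f a) ≤ Real.exp (s * (𝔼 a, f a) + s ^ 2 * K ^ 2 / 2) := by
  obtain ⟨a₀⟩ := ‹Nonempty Ω›
  have hK : 0 ≤ K := (abs_nonneg _).trans (hf a₀ a₀)
  set M := 𝔼 a, f a with hM
  have hdev a : |(f a - M) / K| ≤ 1 := by
    rw [abs_div, abs_of_nonneg hK]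
    exact div_le_one_of_le₀ (abs_sub_expect_le hf a) hK
  have hscale a : (f a - M) / K * K = f a - M :=
    div_mul_cancel_of_imp fun h => abs_nonpos_iff.1 (h ▸ abs_sub_expect_le hf a)
  calc 𝔼 a, Real.exp (s * f a)
      = Real.exp (s * M) * 𝔼 a, Real.exp ((f a - M) / K * (s * K)) := by
        rw [mul_expect]
        refine expect_congr rfl fun a _ => ?_
        rw [← Real.exp_add, mul_left_comm, hscale]
        ring_nf
    _ ≤ Real.exp (s * M) * 𝔼 a, (Real.cosh (s * K) + (f a - M) / K * Real.sinh (s * K)) := by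
        gcongr with a
        exact Real.exp_mul_le_cosh_add_mul_sinh (hdev a) _
    _ = Real.exp (s * M) * Real.cosh (s * K) := by
        rw [expect_add_distrib, ← expect_mul, ← expect_div, expect_sub_distrib,
          Fintype.expect_const, Fintype.expect_const, ← hM, sub_self, zero_div, zero_mul, add_zero]
    _ ≤ Real.exp (s * M) * Real.exp ((s * K) ^ 2 / 2) := by
        gcongr
        exact Real.cosh_le_exp_half_sq _
    _ = Real.exp (s * M + s ^ 2 * K ^ 2 / 2) := by rw [← Real.exp_add, mul_pow]

theorem expect_pi_fin_succ {n : ℕ} {Ω : Fin (n + 1) → Type*} [∀ i, Fintype (Ω i)]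
    (f : (∀ i, Ω i) → ℝ) :
    𝔼 ω, f ω = 𝔼 a : Ω 0, 𝔼 τ : ∀ i : Fin n, Ω i.succ, f (Fin.cons a τ) :=
  calc 𝔼 ω, f ω = 𝔼 p : Ω 0 × (∀ i : Fin n, Ω i.succ), f (Fin.cons p.1 p.2) :=
        (Fintype.expect_equiv (Fin.consEquiv Ω) _ _ fun _ => rfl).symm
    _ = _ := by
        rw [← univ_product_univ]
        exact expect_product' univ univ fun a τ => f (Fin.cons a τ)

variable {n : ℕ} {Ω : Fin n → Type*} [∀ i, Fintype (Ω i)] [∀ i, Nonempty (Ω i)]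
  {f : (∀ i, Ω i) → ℝ} {c : Fin n → ℝ}

theorem expect_exp_mul_le_of_abs_update_sub_le (s : ℝ)
    (hf : ∀ i ω a, |f (Function.update ω i a) - f ω| ≤ c i) :
    𝔼 ω, Real.exp (s * f ω) ≤ Real.exp (s * (𝔼 ω, f ω) + s ^ 2 * (∑ i, c i ^ 2) / 2) := by
  induction n with
  | zero => simp
  | succ n ih =>
    let M (a : Ω 0) : ℝ := 𝔼 τ : ∀ i : Fin n, Ω i.succ, f (Fin.cons a τ)
    have htail a : 𝔼 τ : ∀ i : Fin n, Ω i.succ, Real.exp (s * f (Fin.cons a τ)) ≤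
        Real.exp (s * M a + s ^ 2 * (∑ i : Fin n, c i.succ ^ 2) / 2) :=
      ih fun i τ b => by simpa only [Fin.cons_update] using hf i.succ (Fin.cons a τ) b
    have hhead a b : |M a - M b| ≤ c 0 := by
      rw [← expect_sub_distrib]
      refine (abs_expect_le _ _).trans (expect_le univ_nonempty fun τ _ => ?_)
      simpa only [Fin.update_cons_zero] using hf 0 (Fin.cons b τ) a
    calc 𝔼 ω, Real.exp (s * f ω)
        ≤ 𝔼 a, Real.exp (s * M a + s ^ 2 * (∑ i : Fin n, c i.succ ^ 2) / 2) := by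
          rw [expect_pi_fin_succ]
          exact expect_le_expect fun a _ => htail a
      _ = (𝔼 a, Real.exp (s * M a)) * Real.exp (s ^ 2 * (∑ i : Fin n, c i.succ ^ 2) / 2) := by
          simp only [Real.exp_add, expect_mul]
      _ ≤ Real.exp (s * (𝔼 a, M a) + s ^ 2 * c 0 ^ 2 / 2) *
          Real.exp (s ^ 2 * (∑ i : Fin n, c i.succ ^ 2) / 2) := by
          gcongr
          exact expect_exp_mul_le s hhead
      _ = Real.exp (s * (𝔼 ω, f ω) + s ^ 2 * (∑ i, c i ^ 2) / 2) := by
          rw [← Real.exp_add, Fin.sum_univ_succ, expect_pi_fin_succ f, add_assoc, mul_add, add_div]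

/-- McDiarmid's inequality, with `1 / 2` in place of the optimal constant `2` in the exponent. -/
theorem expect_indicator_expect_add_le {t : ℝ} (ht : 0 ≤ t)
    (hf : ∀ i ω a, |f (Function.update ω i a) - f ω| ≤ c i) :
    (𝔼 ω, if (𝔼 ω, f ω) + t ≤ f ω then 1 else 0) ≤ Real.exp (-(t ^ 2 / (2 * ∑ i, c i ^ 2))) := by
  set M := 𝔼 ω, f ω
  set V := ∑ i, c i ^ 2
  have hV : 0 ≤ V := sum_nonneg fun i _ => sq_nonneg (c i)
  calc (𝔼 ω, if M + t ≤ f ω then 1 else 0)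
      ≤ 𝔼 ω, Real.exp (t / V * f ω) * Real.exp (-(t / V * (M + t))) := by
        refine expect_le_expect fun ω _ => ?_
        rw [← Real.exp_add, ← sub_eq_add_neg, ← mul_sub]
        split_ifs with h
        · exact Real.one_le_exp (mul_nonneg (by positivity) (sub_nonneg.2 h))
        · positivity
    _ ≤ Real.exp (t / V * M + (t / V) ^ 2 * V / 2) * Real.exp (-(t / V * (M + t))) := by
        rw [← expect_mul]
        gcongr
        exact expect_exp_mul_le_of_abs_update_sub_le _ hf
    _ = Real.exp (-(t ^ 2 / (2 * V))) := by
        rw [← Real.exp_add]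
        rcases hV.eq_or_lt' with hV | hV
        · simp [hV]
        · congr 1
          field_simp
          ring

theorem cuckooPr_cuckooE_add_le {n m : ℕ} {f : HashPair n m → ℝ} {K t : ℝ} (hm : 0 < m)
    (ht : 0 ≤ t)
    (hf : ∀ (x : Fin n) (ω η : HashPair n m), (∀ y ≠ x, ω.1 y = η.1 y) →
      (∀ y ≠ x, ω.2 y = η.2 y) → f ω ≤ f η + K) :
    cuckooPr n m (fun ω => cuckooE n m f + t ≤ f ω) ≤ Real.exp (-(t ^ 2 / (2 * (n * K ^ 2)))) := by
  have : Nonempty (Fin m) := ⟨⟨0, hm⟩⟩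
  let e := Equiv.arrowProdEquivProdArrow (Fin n) (fun _ => Fin m) (fun _ => Fin m)
  have hE (F : HashPair n m → ℝ) : 𝔼 ω, F (e ω) = 𝔼 ω, F ω :=
    Fintype.expect_equiv e _ _ fun _ => rfl
  have hlip (x : Fin n) (ω : Fin n → Fin m × Fin m) (a : Fin m × Fin m) :
      |f (e (Function.update ω x a)) - f (e ω)| ≤ K := by
    have hne y (hy : y ≠ x) : Function.update ω x a y = ω y := Function.update_of_ne hy a ω
    refine abs_sub_le_iff.2 ⟨sub_left_le_of_le_add ?_, sub_left_le_of_le_add ?_⟩ <;>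
      refine hf x _ _ (fun y hy => ?_) fun y hy => ?_ <;>
      simp [e, Equiv.arrowProdEquivProdArrow, hne y hy]
  have h := expect_indicator_expect_add_le (f := fun ω => f (e ω)) (c := fun _ : Fin n => K) ht hlip
  rw [sum_const, card_univ, Fintype.card_fin, nsmul_eq_mul, hE] at h
  rw [cuckooPr_eq_expect, cuckooE_eq_expect, ← hE]
  exact h

end BoundedDifferences

section Assembly

variable {n m i J : ℕ}

theorem mul_exp_one_sub_le_of_le {l l' : ℝ} (h : l ≤ l') (hl' : l' ≤ 1) :
    l * Real.exp (1 - l) ≤ l' * Real.exp (1 - l') :=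
  calc l * Real.exp (1 - l) ≤ l' * Real.exp (l - l') * Real.exp (1 - l) := by
        gcongr
        rcases le_total l' 0 with hl'0 | hl'0
        · have := Real.exp_le_one_iff.2 (sub_nonpos.2 h)
          nlinarith
        · have := Real.add_one_le_exp (l - l')
          nlinarith
    _ = l' * Real.exp (1 - l') := by
        rw [mul_assoc, ← Real.exp_add]
        ring_nf

theorem mul_exp_one_sub_lt_one {l : ℝ} (hl : l ≠ 1) : l * Real.exp (1 - l) < 1 := by
  have h := Real.add_one_lt_exp (sub_ne_zero.2 hl)
  rw [sub_add_cancel, ← neg_sub 1 l, Real.exp_neg] at h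
  simpa using (lt_div_iff₀ (Real.exp_pos (1 - l))).1 (h.trans_eq (one_div _).symm)

theorem cuckooPr_le_add {P Q R : HashPair n m → Prop} (h : ∀ ω, P ω → Q ω ∨ R ω) :
    cuckooPr n m P ≤ cuckooPr n m Q + cuckooPr n m R := by
  simp only [cuckooPr_eq_expect, ← expect_add_distrib]
  refine expect_le_expect fun ω _ => ?_
  have := h ω
  split_ifs <;> first | (exfalso; tauto) | norm_num

theorem expect_card_midsizeVertices_le {l T : ℝ} (hJn : J ≤ n) (hnm : n + J ≤ m)
    (hl : (n / m : ℝ) ≤ l) (hl1 : l < 1) (hJT : (J : ℝ) ^ 5 ≤ T)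
    (hX : cuckooE n m (fun ω => (cuckooX n m ω.1 ω.2 i : ℝ)) ≤ T) :
    cuckooE n m (fun ω => (#(midsizeVertices n m i J ω.1 ω.2) : ℝ)) ≤
      (9 * (1 - l * Real.exp (1 - l))⁻¹ + 8) * T := by
  have hρ := mul_exp_one_sub_lt_one hl1.ne
  have hT : 0 ≤ T := (by positivity : (0 : ℝ) ≤ J ^ 5).trans hJT
  have hinv : 0 < (1 - l * Real.exp (1 - l))⁻¹ := inv_pos.2 (sub_pos.2 hρ)
  rw [cuckooE_eq_expect] at hX ⊢
  simp only [card_midsizeVertices, Nat.cast_sum, expect_sum_comm]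
  rcases le_or_gt J i with hiJ | hiJ
  · rw [Ico_eq_empty_of_le hiJ, sum_empty]
    positivity
  have happrox {j} (hj : j < J) := abs_sub_le_iff.1 (abs_expect_cuckooX_sub_le hj hJn hnm)
  have hJ4 : (J : ℝ) ^ 4 ≤ T :=
    (pow_le_pow_right₀ (Nat.one_le_cast.2 (by omega)) (by norm_num)).trans hJT
  have hρ' := mul_exp_one_sub_le_of_le hl hl1.le
  have hsum := sum_Ico_borelTanner_one_le (by positivity) (hρ'.trans_lt hρ) i J
  have hB := borelTanner_nonneg (l := (n / m : ℝ)) (by positivity) 1 i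
  calc ∑ j ∈ Ico i J, 𝔼 ω : HashPair n m, (cuckooX n m ω.1 ω.2 j : ℝ)
      ≤ ∑ j ∈ Ico i J, (2 * m * borelTanner (n / m) 1 j + 8 * J ^ 4) :=
        sum_le_sum fun j hj => sub_le_iff_le_add'.1 (happrox (mem_Ico.1 hj).2).1
    _ = 2 * m * ∑ j ∈ Ico i J, borelTanner (n / m) 1 j + (J - i : ℕ) * (8 * J ^ 4) := by
        rw [sum_add_distrib, ← mul_sum, sum_const, Nat.card_Ico, nsmul_eq_mul]
    _ ≤ 2 * m * ((1 - l * Real.exp (1 - l))⁻¹ * borelTanner (n / m) 1 i) + J * (8 * J ^ 4) := by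
        gcongr
        · exact hsum.trans (by gcongr)
        · exact Nat.sub_le J i
    _ = (1 - l * Real.exp (1 - l))⁻¹ * (2 * m * borelTanner (n / m) 1 i) + 8 * J ^ 5 := by ring
    _ ≤ (1 - l * Real.exp (1 - l))⁻¹ * (T + 8 * T) + 8 * T := by
        gcongr
        linarith [(happrox hiJ).2]
    _ = (9 * (1 - l * Real.exp (1 - l))⁻¹ + 8) * T := by ring

theorem cuckooPr_mul_le_natCard_le {l T : ℝ} (hi : i ≠ 0) (hJn : J ≤ n) (hnm : n + J ≤ m)
    (hm : 0 < m) (hl : (n / m : ℝ) ≤ l) (hl1 : l < 1) (hJT : (J : ℝ) ^ 5 ≤ T)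
    (hX : cuckooE n m (fun ω => (cuckooX n m ω.1 ω.2 i : ℝ)) ≤ T) :
    cuckooPr n m (fun ω => (9 * (1 - l * Real.exp (1 - l))⁻¹ + 9) * T ≤
        (Nat.card {v // i ≤ cuckooC n m ω.1 ω.2 v} : ℝ)) ≤
      Real.exp (-(T ^ 2 / (2 * (n * (6 * J : ℝ) ^ 2)))) +
        cuckooPr n m (fun ω => ∃ v, J ≤ cuckooC n m ω.1 ω.2 v) := by
  have hmean := expect_card_midsizeVertices_le hJn hnm hl hl1 hJT hX
  have htail := cuckooPr_cuckooE_add_le (t := T) hm ((by positivity : (0 : ℝ) ≤ J ^ 5).trans hJT)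
    (f := fun ω => (#(midsizeVertices n m i J ω.1 ω.2) : ℝ)) (K := 6 * J)
    fun x ω η h₀ h₁ => mod_cast card_midsizeVertices_le_of_agree hi h₀ h₁
  refine (cuckooPr_le_add fun ω hω => ?_).trans (add_le_add_left htail _)
  refine or_iff_not_imp_right.2 fun hJ => ?_
  have hmid : #(midsizeVertices n m i J ω.1 ω.2) =
      Nat.card {v // i ≤ cuckooC n m ω.1 ω.2 v} := by
    rw [Nat.card_eq_fintype_card, Fintype.card_subtype, midsizeVertices]
    refine congrArg card (filter_congr fun v _ => and_iff_left ?_)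
    exact not_le.1 fun hv => hJ ⟨v, hv⟩
  rw [hmid]
  linarith

end Assembly

section Asymptotics

open Filter Asymptotics Topology

variable {a δ : ℝ}

theorem isLittleO_mul_sq_log_add_log_add (b c : ℝ) (hδ : 0 < δ) :
    (fun x => c * Real.log x ^ 2 + Real.log x + b) =o[atTop] fun x : ℝ => x ^ δ := by
  have hsq : (fun x => Real.log x ^ 2) =o[atTop] fun x : ℝ => x ^ δ := by
    simpa only [Real.rpow_two] using isLittleO_log_rpow_rpow_atTop 2 hδ
  have hconst : (fun _ => b) =o[atTop] fun x : ℝ => x ^ δ :=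
    isLittleO_const_left.2 (.inr (tendsto_norm_atTop_atTop.comp (tendsto_rpow_atTop hδ)))
  exact ((hsq.const_mul_left c).add (isLittleO_log_rpow_atTop hδ)).add hconst

theorem eventually_mul_exp_neg_mul_rpow_le (b c : ℝ) (ha : 0 < a) (hδ : 0 < δ) :
    ∀ᶠ x : ℝ in atTop, b * x * Real.exp (-(a * x ^ δ)) ≤ x ^ (-(c * Real.log x)) / 2 := by
  filter_upwards [(isLittleO_mul_sq_log_add_log_add (1 + b) c hδ).bound ha, eventually_gt_atTop 0]
    with x hx hx0
  rw [Real.norm_of_nonneg (r := x ^ δ) (by positivity)] at hx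
  rw [le_div_iff₀ two_pos, Real.rpow_def_of_pos hx0 (-(c * Real.log x))]
  calc b * x * Real.exp (-(a * x ^ δ)) * 2
      ≤ Real.exp b * Real.exp (Real.log x) * Real.exp (-(a * x ^ δ)) * Real.exp 1 := by
        rw [Real.exp_log hx0]
        gcongr
        · linarith [Real.add_one_le_exp b]
        · linarith [Real.add_one_le_exp 1]
    _ = Real.exp (b + Real.log x + -(a * x ^ δ) + 1) := by simp only [Real.exp_add]
    _ ≤ Real.exp (Real.log x * -(c * Real.log x)) := by
        gcongr
        linarith [(Real.le_norm_self _).trans hx]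

/-- The size above which a component is treated as giant: small enough for the approximation
and concentration errors, which are polynomial in it, and large enough for the exponential tail
of the component size to beat `n ^ (-(c * log n))`. -/
noncomputable def sizeCutoff (n : ℕ) : ℕ := ⌊(n : ℝ) ^ ((1 : ℝ) / 10)⌋₊

theorem sizeCutoff_le (n : ℕ) : (sizeCutoff n : ℝ) ≤ (n : ℝ) ^ ((1 : ℝ) / 10) :=
  Nat.floor_le (by positivity)

theorem sizeCutoff_ne_zero {n : ℕ} (hn : n ≠ 0) : sizeCutoff n ≠ 0 := by
  rw [sizeCutoff, ← Nat.pos_iff_ne_zero, Nat.floor_pos]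
  exact Real.one_le_rpow (by norm_cast; omega) (by norm_num)

theorem sizeCutoff_pow_le {n k : ℕ} {t : ℝ} (hn : n ≠ 0) (h : (k : ℝ) / 10 ≤ t) :
    (sizeCutoff n : ℝ) ^ k ≤ (n : ℝ) ^ t :=
  calc (sizeCutoff n : ℝ) ^ k ≤ ((n : ℝ) ^ ((1 : ℝ) / 10)) ^ k := by
        gcongr
        exact sizeCutoff_le n
    _ = (n : ℝ) ^ ((k : ℝ) / 10) := by
        rw [← Real.rpow_mul_natCast (Nat.cast_nonneg n), one_div_mul_eq_div]
    _ ≤ (n : ℝ) ^ t := Real.rpow_le_rpow_of_exponent_le (by norm_cast; omega) h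

theorem eventually_one_add_sizeCutoff_le (ha : 0 < a) :
    ∀ᶠ n : ℕ in atTop, (1 + sizeCutoff n : ℝ) ≤ a * n := by
  have h := (tendsto_rpow_atTop (show (0 : ℝ) < 9 / 10 by norm_num)).eventually_ge_atTop (2 / a)
  filter_upwards [tendsto_natCast_atTop_atTop.eventually h, eventually_gt_atTop 0] with n hn hn0
  have hn0' : (0 : ℝ) < n := Nat.cast_pos.2 hn0
  have hone : (1 : ℝ) ≤ (n : ℝ) ^ ((1 : ℝ) / 10) :=
    Real.one_le_rpow (Nat.one_le_cast.2 hn0) (by norm_num)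
  calc (1 + sizeCutoff n : ℝ) ≤ 2 * (n : ℝ) ^ ((1 : ℝ) / 10) := by linarith [sizeCutoff_le n]
    _ ≤ a * (n : ℝ) ^ ((9 : ℝ) / 10) * (n : ℝ) ^ ((1 : ℝ) / 10) := by
        gcongr
        exact (div_le_iff₀' ha).1 hn
    _ = a * n := by
        rw [mul_assoc, ← Real.rpow_add hn0']
        norm_num

theorem eventually_sizeCutoff_add_le {ε : ℝ} (hε : 0 < ε) :
    ∀ᶠ n : ℕ in atTop, ∀ m : ℕ, (1 + ε) * n ≤ m → sizeCutoff n ≤ n ∧ n + sizeCutoff n ≤ m ∧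
      2 * (1 + sizeCutoff n) ≤ m ∧ n ≤ (1 + ε / 2)⁻¹ * (m - (1 + sizeCutoff n : ℕ)) := by
  filter_upwards [eventually_one_add_sizeCutoff_le one_half_pos,
    eventually_one_add_sizeCutoff_le (half_pos hε)] with n hJn hJε m hnm
  have : (n : ℝ) ≤ m := (le_mul_of_one_le_left n.cast_nonneg (by linarith)).trans hnm
  refine ⟨Nat.cast_le (α := ℝ).1 ?_, Nat.cast_le (α := ℝ).1 ?_, Nat.cast_le (α := ℝ).1 ?_, ?_⟩
  · linarith
  · push_cast
    linarith
  · push_cast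
    linarith
  · rw [← div_eq_inv_mul, le_div_iff₀ (by positivity)]
    push_cast
    linarith

theorem eventually_exp_neg_div_sizeCutoff_le (c : ℝ) :
    ∀ᶠ n : ℕ in atTop, Real.exp (-(((n : ℝ) ^ ((2 : ℝ) / 3)) ^ 2 /
      (2 * (n * (6 * sizeCutoff n : ℝ) ^ 2)))) ≤ (n : ℝ) ^ (-(c * Real.log n)) / 2 := by
  have h := eventually_mul_exp_neg_mul_rpow_le (a := 1 / 72) (δ := 1 / 10) 1 c (by norm_num)
    (by norm_num)
  filter_upwards [tendsto_natCast_atTop_atTop.eventually h, eventually_ne_atTop 0] with n hn hn0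
  have hn1 : (1 : ℝ) ≤ n := by norm_cast; omega
  have hJ : (0 : ℝ) < sizeCutoff n := Nat.cast_pos.2 (Nat.pos_of_ne_zero (sizeCutoff_ne_zero hn0))
  have hexponent : 1 / 72 * (n : ℝ) ^ ((1 : ℝ) / 10) ≤
      ((n : ℝ) ^ ((2 : ℝ) / 3)) ^ 2 / (2 * (n * (6 * sizeCutoff n : ℝ) ^ 2)) := by
    rw [le_div_iff₀ (by positivity)]
    calc _ = (n : ℝ) ^ ((1 : ℝ) / 10) * n * (sizeCutoff n : ℝ) ^ 2 := by ring
      _ ≤ (n : ℝ) ^ ((1 : ℝ) / 10) * n * (n : ℝ) ^ ((7 : ℝ) / 30) := by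
          gcongr
          exact sizeCutoff_pow_le hn0 (by norm_num)
      _ = ((n : ℝ) ^ ((2 : ℝ) / 3)) ^ 2 := by
          have hn0 : (0 : ℝ) < n := by positivity
          rw [← Real.rpow_add_one hn0.ne', ← Real.rpow_add hn0,
            ← Real.rpow_mul_natCast hn0.le]
          norm_num
  calc _ ≤ Real.exp (-(1 / 72 * (n : ℝ) ^ ((1 : ℝ) / 10))) := by gcongr
    _ ≤ 1 * n * Real.exp (-(1 / 72 * (n : ℝ) ^ ((1 : ℝ) / 10))) :=
        le_mul_of_one_le_left (by positivity) (by linarith)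
    _ ≤ _ := hn

theorem eventually_mul_div_pow_sizeCutoff_sub_one_le {K z : ℝ} (c : ℝ) (hK : 0 ≤ K) (hz : 1 < z) :
    ∀ᶠ n : ℕ in atTop, K * n / (z ^ sizeCutoff n - 1) ≤ (n : ℝ) ^ (-(c * Real.log n)) / 2 := by
  have hz0 : 0 < z := zero_lt_one.trans hz
  have h := eventually_mul_exp_neg_mul_rpow_le (δ := 1 / 10) (2 * z * K) c (Real.log_pos hz)
    (by norm_num)
  have hlarge : Tendsto (fun n => z ^ sizeCutoff n) atTop atTop :=
    (tendsto_pow_atTop_atTop_of_one_lt hz).comp <| tendsto_nat_floor_atTop.comp <|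
      (tendsto_rpow_atTop (by norm_num)).comp tendsto_natCast_atTop_atTop
  filter_upwards [tendsto_natCast_atTop_atTop.eventually h, hlarge.eventually_ge_atTop 2]
    with n hn hzn
  have hpow : Real.exp (Real.log z * (n : ℝ) ^ ((1 : ℝ) / 10)) ≤ z * z ^ sizeCutoff n := by
    rw [← Real.rpow_def_of_pos hz0, ← pow_succ', ← Real.rpow_natCast]
    refine Real.rpow_le_rpow_of_exponent_le hz.le ?_
    exact_mod_cast (Nat.lt_floor_add_one _).le
  calc K * n / (z ^ sizeCutoff n - 1)
      ≤ K * n / (Real.exp (Real.log z * (n : ℝ) ^ ((1 : ℝ) / 10)) / (2 * z)) := by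
        gcongr
        rw [div_le_iff₀ (by positivity)]
        nlinarith
    _ = 2 * z * K * n * Real.exp (-(Real.log z * (n : ℝ) ^ ((1 : ℝ) / 10))) := by
        rw [Real.exp_neg]
        field_simp
    _ ≤ _ := hn

end Asymptotics

theorem cuckoo_Xstar_bound_general (ε : ℝ) (hε : 0 < ε) :
    ∃ γ : ℝ, 0 < γ ∧ ∀ c : ℝ, ∃ n₀ : ℕ, ∀ n m : ℕ, n₀ ≤ n → (1 + ε) * n ≤ m →
      ∀ i : ℕ, 1 ≤ i →
        cuckooE n m (fun ω => (cuckooX n m ω.1 ω.2 i : ℝ)) < (n : ℝ) ^ ((2 : ℝ) / 3) →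
        cuckooPr n m (fun ω =>
            γ * (n : ℝ) ^ ((2 : ℝ) / 3) ≤
              (Nat.card {v : Fin m ⊕ Fin m // i ≤ cuckooC n m ω.1 ω.2 v} : ℝ))
          ≤ (n : ℝ) ^ (-(c * Real.log n)) := by
  have hl : (1 + ε)⁻¹ < 1 := inv_lt_one_of_one_lt₀ (by linarith)
  have hμ : 0 < (1 + ε / 2)⁻¹ := by positivity
  obtain ⟨y, z, hy, hz, hexp⟩ := exists_exp_le hμ (inv_lt_one_of_one_lt₀ (by linarith))
  have hρ := sub_pos.2 (mul_exp_one_sub_lt_one hl.ne)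
  refine ⟨9 * (1 - (1 + ε)⁻¹ * Real.exp (1 - (1 + ε)⁻¹))⁻¹ + 9, by positivity, fun c => ?_⟩
  obtain ⟨n₀, hn₀⟩ := Filter.eventually_atTop.1 <|
    (Filter.eventually_ne_atTop 0).and <| (eventually_sizeCutoff_add_le hε).and <|
    (eventually_exp_neg_div_sizeCutoff_le c).and <|
    eventually_mul_div_pow_sizeCutoff_sub_one_le (K := 4 * (y - 1) / (1 + ε / 2)⁻¹) c
      (div_nonneg (by linarith) hμ.le) hz
  refine ⟨n₀, fun n m hn hnm i hi hX => ?_⟩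
  obtain ⟨hn0, hsize, hconcentration, hgiant⟩ := hn₀ n hn
  obtain ⟨hJn, hJm, hm, hnμ⟩ := hsize m hnm
  have hload : (n / m : ℝ) ≤ (1 + ε)⁻¹ := by
    rw [div_le_iff₀ (by norm_cast; omega), ← div_eq_inv_mul, le_div_iff₀' (by positivity)]
    exact hnm
  calc _ ≤ _ := cuckooPr_mul_le_natCard_le (by omega) hJn hJm (by omega) hload hl
        (sizeCutoff_pow_le hn0 (by norm_num)) hX.le
    _ ≤ (n : ℝ) ^ (-(c * Real.log n)) / 2 + (n : ℝ) ^ (-(c * Real.log n)) / 2 :=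
        add_le_add hconcentration <|
          (cuckooPr_exists_le_cuckooC_le hμ hy.le hz hexp (sizeCutoff_ne_zero hn0) hm hnμ).trans
            hgiant
    _ = (n : ℝ) ^ (-(c * Real.log n)) := add_halves _

/-- Let `i*` be the smallest `i ≥ 1` with `E[X_i] < n^{2/3}`, and let `X_*` be the number
of vertices in components with at least `i*` edges. If `(1+ε)·n ≤ m` then
`Pr(X_* ≥ γ·n^{2/3}) ≤ n^{−c·log n}`, where `γ, c > 0` and the threshold `n₀` depend
only on `ε`. -/
theorem cuckoo_Xstar_bound (ε : ℝ) (hε : 0 < ε) :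
    ∃ γ c : ℝ, 0 < γ ∧ 0 < c ∧ ∃ n₀ : ℕ, ∀ n m : ℕ, n₀ ≤ n → (1 + ε) * n ≤ m →
      ∀ istar : ℕ, 1 ≤ istar →
        cuckooE n m (fun ω => (cuckooX n m ω.1 ω.2 istar : ℝ)) < (n : ℝ) ^ ((2 : ℝ) / 3) →
        (∀ j : ℕ, 1 ≤ j → j < istar →
          (n : ℝ) ^ ((2 : ℝ) / 3) ≤ cuckooE n m (fun ω => (cuckooX n m ω.1 ω.2 j : ℝ))) →
        cuckooPr n m (fun ω =>
            γ * (n : ℝ) ^ ((2 : ℝ) / 3) ≤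
              (Nat.card {v : Fin m ⊕ Fin m // istar ≤ cuckooC n m ω.1 ω.2 v} : ℝ))
          ≤ (n : ℝ) ^ (-(c * Real.log n)) := by
  obtain ⟨γ, hγ, h⟩ := cuckoo_Xstar_bound_general ε hε
  obtain ⟨n₀, hn₀⟩ := h 1
  exact ⟨γ, 1, hγ, one_pos, n₀, fun n m hn hnm i hi hX _ => hn₀ n m hn hnm i hi hX⟩
end

section
/- Fix a constant ε > 0. There exist constants c₃ > 0, c > 0 and a threshold n₀ (all depending only on ε) such that for all integers n ≥ n₀ and m with (1+ε)·n ≤ m, the random cuckoo graph with n edges on parts of size m satisfies: the probability that (1/(2m))·∑_{v} C(v) > c₃ (the sum over all 2m vertices v) is at most n^{−c·log n}. -/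
open Classical

/-!
Write `X = ∑ v, C(v)`, the number of pairs of a vertex and an item in the same component. Suppose
that the edges of a set `R` of at most `u` items have been revealed, and let `(v, x)` be such a
pair. A trail from `v` through `x` either avoids `R`, or its parts before the first and after the
last edge in `R` are two trails that hang off revealed edges. The expected number of trails from a
fixed vertex is at most a geometric series `K` in the load `n / m`, so the two cases contribute at
most `2mK` and `4K²u²` to the conditional expectation of `X`. On graphs without trails longer than
`ℓ`, revealing at most `ℓ` further edges confirms a pair, so by induction on `k` the `k`-th moment
of `X` is at most `(2mK + 4K²(ℓk)²)ᵏ`. Trails longer than `ℓ` occur with probability at most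
`2m(n/m)^(ℓ+1)`. With `ℓ = k = ⌈log² n⌉` the term `(ℓk)²` is eventually at most `n`, and Markov's
inequality for the `k`-th moment gives the bound.
-/

namespace Cuckoo

open Finset

section Lists

variable {α : Type*} {P : α → Prop} {l : List α}

theorem exists_eq_append_cons_first (h : ∃ x ∈ l, P x) :
    ∃ A y B, l = A ++ y :: B ∧ P y ∧ ∀ x ∈ A, ¬ P x := by
  obtain ⟨y, hy⟩ := Option.isSome_iff_exists.1
    (List.find?_isSome (p := fun x => decide (P x)) |>.2 (by simpa using h))
  obtain ⟨hPy, A, B, hl, hA⟩ := List.find?_eq_some_iff_append.1 hy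
  exact ⟨A, y, B, hl, by simpa using hPy, by simpa using hA⟩

theorem exists_eq_append_cons_last (h : ∃ x ∈ l, P x) :
    ∃ C z D, l = C ++ z :: D ∧ P z ∧ ∀ x ∈ D, ¬ P x := by
  obtain ⟨A, z, B, hl, hz, hA⟩ := exists_eq_append_cons_first (l := l.reverse) (by simpa using h)
  exact ⟨B.reverse, z, A.reverse, by simpa using congrArg List.reverse hl, hz, by simpa using hA⟩

theorem exists_eq_append_cons_first_last (h : ∃ x ∈ l, P x) :
    ∃ A y B C z D, l = A ++ y :: B ∧ l = C ++ z :: D ∧ P y ∧ P z ∧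
      (∀ x ∈ A ++ D, ¬ P x) ∧ (A ++ D).Sublist l := by
  obtain ⟨A, y, B, rfl, hy, hA⟩ := exists_eq_append_cons_first h
  obtain ⟨C, z, D, hCD, hz, hD⟩ :=
    exists_eq_append_cons_last (P := P) (l := y :: B) ⟨y, List.mem_cons_self, hy⟩
  refine ⟨A, y, B, A ++ C, z, D, rfl, by rw [hCD, List.append_assoc], hy, hz, ?_, ?_⟩
  · exact List.forall_mem_append.2 ⟨hA, hD⟩
  · rw [hCD]
    exact ((List.sublist_cons_self z D).trans (List.sublist_append_right C _)).append_left A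

end Lists

section Sums

variable {κ β M : Type*} [DecidableEq β] [AddCommMonoid M] [PartialOrder M] [IsOrderedAddMonoid M]
  {f : β → M}

theorem sum_union_le_add_sum (s t : Finset β) (hf : ∀ b, 0 ≤ f b) :
    ∑ b ∈ s ∪ t, f b ≤ ∑ b ∈ s, f b + ∑ b ∈ t, f b :=
  (le_add_of_nonneg_right (sum_nonneg fun b _ => hf b)).trans_eq sum_union_inter

theorem sum_biUnion_le_sum_sum (s : Finset κ) (t : κ → Finset β) (hf : ∀ b, 0 ≤ f b) :
    ∑ b ∈ s.biUnion t, f b ≤ ∑ i ∈ s, ∑ b ∈ t i, f b := by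
  have h : s.biUnion t = (s.sigma t).image Sigma.snd := by ext; simp
  exact h ▸ (sum_image_le_of_nonneg fun b _ => hf b).trans_eq (sum_sigma s t fun p => f p.2)

theorem sum_biUnion_image_le_sum_sum {γ : Type*} (s : Finset κ) (t : κ → Finset γ)
    (g : κ → γ → β) (hf : ∀ b, 0 ≤ f b) :
    ∑ b ∈ s.biUnion (fun i => (t i).image (g i)), f b ≤ ∑ i ∈ s, ∑ c ∈ t i, f (g i c) :=
  (sum_biUnion_le_sum_sum s _ hf).trans <|
    sum_le_sum fun _ _ => sum_image_le_of_nonneg fun b _ => hf b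

end Sums

section Records

variable {ι α : Type*} {ω : ι → α} {R S : List (ι × α)}

/-- The assignment `ω` takes every value recorded in the list `R` of (item, value) pairs, i.e. `ω`
lies in the cylinder of `R`. -/
def Agrees (ω : ι → α) (R : List (ι × α)) : Prop :=
  ∀ e ∈ R, ω e.1 = e.2

theorem agrees_append : Agrees ω (R ++ S) ↔ Agrees ω R ∧ Agrees ω S :=
  List.forall_mem_append

theorem Agrees.subset (h : Agrees ω R) (hS : S ⊆ R) : Agrees ω S :=
  fun e he => h e (hS he)

theorem Agrees.nodup_items (h : Agrees ω R) (hR : R.Nodup) : (R.map Prod.fst).Nodup :=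
  hR.map_on fun e he e' he' hee' => Prod.ext hee' (by rw [← h e he, ← h e' he', hee'])

/-- The probability that a uniformly random assignment agrees with `R`, provided the items of `R`
are distinct. -/
noncomputable def recordProb [Fintype α] (R : List (ι × α)) : ℝ :=
  (Fintype.card α : ℝ)⁻¹ ^ R.length

theorem recordProb_nonneg [Fintype α] (R : List (ι × α)) : 0 ≤ recordProb R := by
  unfold recordProb
  positivity

theorem recordProb_append [Fintype α] (R S : List (ι × α)) :
    recordProb (R ++ S) = recordProb R * recordProb S := by
  simp only [recordProb, List.length_append, pow_add]

variable [DecidableEq ι] [Fintype α]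

theorem card_filter_recorded [Nonempty α] (hR : (R.map Prod.fst).Nodup) (x : ι) :
    (#{a : α | ∀ e ∈ R, e.1 = x → a = e.2} : ℝ) =
      Fintype.card α * if x ∈ (R.map Prod.fst).toFinset then (Fintype.card α : ℝ)⁻¹ else 1 := by
  have hα : (Fintype.card α : ℝ) ≠ 0 := by positivity
  split_ifs with hx
  · obtain ⟨e, he, rfl⟩ := List.mem_map.1 (List.mem_toFinset.1 hx)
    have hval : ({a : α | ∀ e' ∈ R, e'.1 = e.1 → a = e'.2} : Finset α) = {e.2} := by
      ext a
      simp only [mem_filter, mem_univ, true_and, mem_singleton]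
      refine ⟨fun h => h e he rfl, ?_⟩
      rintro rfl e' he' hee'
      rw [List.inj_on_of_nodup_map hR he' he hee']
    rw [hval, card_singleton, mul_inv_cancel₀ hα, Nat.cast_one]
  · have hfree : ∀ e ∈ R, e.1 ≠ x := fun e he hex =>
      hx (List.mem_toFinset.2 (List.mem_map.2 ⟨e, he, hex⟩))
    rw [filter_true_of_mem fun a _ e he hex => absurd hex (hfree e he), mul_one, card_univ]

variable [Fintype ι]

/-- The assignments that agree with the record `R`. -/
noncomputable def cylinder (R : List (ι × α)) : Finset (ι → α) :=
  {ω | Agrees ω R}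

@[simp]
theorem mem_cylinder : ω ∈ cylinder R ↔ Agrees ω R := by
  simp [cylinder]

@[simp]
theorem cylinder_nil : cylinder ([] : List (ι × α)) = univ := by
  ext ω
  simp [Agrees]

theorem cylinder_eq_piFinset (R : List (ι × α)) :
    cylinder R = Fintype.piFinset fun x => {a | ∀ e ∈ R, e.1 = x → a = e.2} := by
  ext ω
  simp only [mem_cylinder, Agrees, Fintype.mem_piFinset, mem_filter, mem_univ, true_and]
  exact ⟨fun h x e he hx => hx ▸ h e he, fun h e he => h e.1 e he rfl⟩

theorem card_cylinder [Nonempty α] (hR : (R.map Prod.fst).Nodup) :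
    (#(cylinder R) : ℝ) = Fintype.card (ι → α) * recordProb R := by
  have hfactor (x : ι) : (#{a : α | ∀ e ∈ R, e.1 = x → a = e.2} : ℝ) =
      Fintype.card α * if x ∈ (R.map Prod.fst).toFinset then (Fintype.card α : ℝ)⁻¹ else 1 := by
    convert card_filter_recorded hR x
  rw [cylinder_eq_piFinset, Fintype.card_piFinset, Nat.cast_prod,
    prod_congr rfl fun x _ => hfactor x, prod_mul_distrib, prod_ite_mem, univ_inter, prod_const,
    prod_const, List.toFinset_card_of_nodup hR, List.length_map, card_univ, Fintype.card_fun,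
    Nat.cast_pow, recordProb]

/-- On every cylinder that fixes at most `u` items, the sum of `f` is at most `s` times the
probability of the cylinder. Equivalently, `𝔼[f | R] ≤ s / |ι → α|` for each record `R` of length at
most `u`. -/
def CylinderBound (f : (ι → α) → ℝ) (u : ℕ) (s : ℝ) : Prop :=
  ∀ R : List (ι × α), (R.map Prod.fst).Nodup → R.length ≤ u →
    ∑ ω ∈ cylinder R, f ω ≤ s * recordProb R

theorem cylinderBound_one [Nonempty α] (u : ℕ) :
    CylinderBound (fun _ : ι → α => 1) u (Fintype.card (ι → α)) := fun R hR _ => by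
  rw [← card_cylinder hR, sum_const, nsmul_one]

theorem CylinderBound.sum_mul_le {κ : Type*} {f X : (ι → α) → ℝ} {u : ℕ} {s : ℝ}
    (hbound : CylinderBound f u s) (hf : ∀ ω, 0 ≤ f ω) (𝒲 : Finset κ) (record : κ → List (ι × α))
    (h𝒲 : ∀ w ∈ 𝒲, ((record w ++ R).map Prod.fst).Nodup ∧ (record w ++ R).length ≤ u)
    (hX : ∀ ω, Agrees ω R → X ω ≤ #{w ∈ 𝒲 | Agrees ω (record w)}) :
    ∑ ω ∈ cylinder R, X ω * f ω ≤ s * (∑ w ∈ 𝒲, recordProb (record w)) * recordProb R := by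
  have hcyl : ∀ w, ({ω ∈ cylinder R | Agrees ω (record w)} : Finset (ι → α)) =
      cylinder (record w ++ R) := fun w => by
    ext ω
    simp only [mem_filter, mem_cylinder, agrees_append, and_comm]
  calc ∑ ω ∈ cylinder R, X ω * f ω
      ≤ ∑ ω ∈ cylinder R, ∑ w ∈ 𝒲, if Agrees ω (record w) then f ω else 0 := by
        refine sum_le_sum fun ω hω => ?_
        rw [← sum_filter, sum_const, nsmul_eq_mul]
        exact mul_le_mul_of_nonneg_right (hX ω (mem_cylinder.1 hω)) (hf ω)
    _ = ∑ w ∈ 𝒲, ∑ ω ∈ cylinder (record w ++ R), f ω := by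
        rw [sum_comm]
        simp only [← sum_filter, hcyl]
    _ ≤ ∑ w ∈ 𝒲, s * recordProb (record w ++ R) :=
        sum_le_sum fun w hw => hbound _ (h𝒲 w hw).1 (h𝒲 w hw).2
    _ = s * (∑ w ∈ 𝒲, recordProb (record w)) * recordProb R := by
        simp only [recordProb_append, mul_sum, sum_mul, mul_assoc]

end Records

section Walks

variable {ι V : Type*} {ω : ι → V × V} {a b v : V ⊕ V} {e : ι × V × V}
  {W W₁ W₂ : List (ι × V × V)} {ℓ : ℕ}

/-- An item with hash values `p` is an edge between the vertices `a` and `b`. -/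
def Joins (p : V × V) (a b : V ⊕ V) : Prop :=
  (a = Sum.inl p.1 ∧ b = Sum.inr p.2) ∨ (a = Sum.inr p.2 ∧ b = Sum.inl p.1)

theorem Joins.symm {p : V × V} (h : Joins p a b) : Joins p b a := by
  unfold Joins at *
  tauto

theorem Joins.same_edge {p : V × V} {a' b' : V ⊕ V} (h : Joins p a b) (h' : Joins p a' b') :
    (a' = a ∧ b' = b) ∨ (a' = b ∧ b' = a) := by
  unfold Joins at *
  grind

/-- The recorded edges `W` form a walk from `a` to `b`. The hash values are part of `W`, so this is
independent of any assignment; the walk occurs in the cuckoo graph of `ω` when `Agrees ω W`. -/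
def IsWalk : V ⊕ V → List (ι × V × V) → V ⊕ V → Prop
  | a, [], b => a = b
  | a, e :: W, b => ∃ c, Joins e.2 a c ∧ IsWalk c W b

theorem isWalk_append : IsWalk a (W₁ ++ W₂) b ↔ ∃ c, IsWalk a W₁ c ∧ IsWalk c W₂ b := by
  induction W₁ generalizing a with
  | nil => simp [IsWalk]
  | cons e W₁ ih =>
    simp only [List.cons_append, IsWalk, ih]
    tauto

theorem isWalk_singleton : IsWalk a [e] b ↔ Joins e.2 a b := by
  simp [IsWalk]

theorem IsWalk.reverse (h : IsWalk a W b) : IsWalk b W.reverse a := by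
  induction W generalizing a with
  | nil => exact Eq.symm h
  | cons e W ih =>
    obtain ⟨c, hac, hcb⟩ := h
    rw [List.reverse_cons, isWalk_append]
    exact ⟨c, ih hcb, isWalk_singleton.2 hac.symm⟩

theorem IsWalk.exists_nodup (h : IsWalk a W b) :
    ∃ W', W'.Sublist W ∧ W'.Nodup ∧ IsWalk a W' b := by
  induction W generalizing a with
  | nil => exact ⟨[], List.Sublist.refl _, List.nodup_nil, h⟩
  | cons e W ih =>
    obtain ⟨c, hac, hcb⟩ := h
    obtain ⟨W', hsub, hnodup, hwalk⟩ := ih hcb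
    by_cases he : e ∈ W'
    · obtain ⟨A, B, rfl⟩ := List.append_of_mem he
      obtain ⟨s, -, t, hst, htb⟩ := isWalk_append.1 hwalk
      have hsub' : (e :: B).Sublist (e :: W) :=
        ((List.sublist_append_right A _).trans hsub).trans (List.sublist_cons_self e W)
      have hnodup' : (e :: B).Nodup := (List.nodup_append.1 hnodup).2.1
      rcases hac.same_edge hst with ⟨rfl, rfl⟩ | ⟨rfl, rfl⟩
      · exact ⟨e :: B, hsub', hnodup', _, hst, htb⟩
      · exact ⟨B, (List.sublist_cons_self e B).trans hsub', hnodup'.of_cons, htb⟩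
    · exact ⟨e :: W', hsub.cons_cons e, List.nodup_cons.2 ⟨he, hnodup⟩, c, hac, hwalk⟩

/-- `W` is a trail from `a` to `b` in the cuckoo graph of `ω`: a walk that repeats no item. -/
structure IsTrail (ω : ι → V × V) (a : V ⊕ V) (W : List (ι × V × V)) (b : V ⊕ V) : Prop where
  isWalk : IsWalk a W b
  agrees : Agrees ω W
  nodup : W.Nodup

/-- The vertices `a` and `b` lie in the same component of the cuckoo graph of `ω`. -/
def Connected (ω : ι → V × V) (a b : V ⊕ V) : Prop :=
  ∃ W, IsWalk a W b ∧ Agrees ω W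

theorem Connected.exists_trail_concat {x : ι} (h : Connected ω v (Sum.inl (ω x).1)) :
    ∃ W b, IsTrail ω v (W ++ [(x, ω x)]) b := by
  obtain ⟨W₀, hwalk₀, hagrees₀⟩ := h
  obtain ⟨W, hsub, hnodup, hwalk⟩ := hwalk₀.exists_nodup
  have hagrees := hagrees₀.subset hsub.subset
  have hx : Agrees ω [(x, ω x)] := by simp [Agrees]
  by_cases hmem : (x, ω x) ∈ W
  · obtain ⟨A, B, rfl⟩ := List.append_of_mem hmem
    rw [← List.singleton_append, ← List.append_assoc] at hwalk hagrees hnodup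
    obtain ⟨b, hb, -⟩ := isWalk_append.1 hwalk
    exact ⟨A, b, hb, (agrees_append.1 hagrees).1, (List.nodup_append.1 hnodup).1⟩
  · refine ⟨W, Sum.inr (ω x).2, isWalk_append.2 ⟨_, hwalk, isWalk_singleton.2 (Or.inl ⟨rfl, rfl⟩)⟩,
      agrees_append.2 ⟨hagrees, hx⟩, ?_⟩
    exact List.nodup_append.2 ⟨hnodup, List.nodup_singleton _, by grind⟩

/-- Every trail in the cuckoo graph of `ω` has at most `ℓ` edges. -/
def TrailsBounded (ℓ : ℕ) (ω : ι → V × V) : Prop :=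
  ∀ a W b, IsTrail ω a W b → W.length ≤ ℓ

theorem exists_trail_of_not_trailsBounded (h : ¬ TrailsBounded ℓ ω) :
    ∃ a W b, IsTrail ω a W b ∧ W.length = ℓ + 1 := by
  simp only [TrailsBounded, not_forall, not_le] at h
  obtain ⟨a, W, b, ⟨hwalk, hagrees, hnodup⟩, hlen⟩ := h
  rw [← List.take_append_drop (ℓ + 1) W, isWalk_append] at hwalk
  obtain ⟨c, hac, -⟩ := hwalk
  have hsub := List.take_sublist (ℓ + 1) W
  exact ⟨a, _, c, ⟨hac, hagrees.subset hsub.subset, hnodup.sublist hsub⟩,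
    List.length_take_of_le hlen⟩

end Walks

section WalkCounting

variable {ι V : Type*} [Fintype ι] [Fintype V] {a b : V ⊕ V} {W : List (ι × V × V)}
  {ℓ : ℕ} {K : ℝ}

/-- The load factor `n / m` of a cuckoo graph with items `ι` and sides `V`. -/
noncomputable def load (ι V : Type*) [Fintype ι] [Fintype V] : ℝ :=
  Fintype.card ι / Fintype.card V

theorem load_nonneg : 0 ≤ load ι V := by
  unfold load
  positivity

theorem one_le_of_sum_load_pow_le (hK : ∑ j ∈ range (ℓ + 1), load ι V ^ j ≤ K) : 1 ≤ K :=
  (single_le_sum (fun j _ => pow_nonneg load_nonneg j) (mem_range.2 ℓ.succ_pos)).trans hK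

/-- The edges that could leave the vertex `a`, each with its other endpoint. -/
noncomputable def stepsFrom (ι : Type*) [Fintype ι] (a : V ⊕ V) :
    Finset ((ι × V × V) × (V ⊕ V)) :=
  {s | Joins s.1.2 a s.2}

theorem mem_stepsFrom {e : ι × V × V} : (e, b) ∈ stepsFrom ι a ↔ Joins e.2 a b := by
  simp [stepsFrom]

theorem card_stepsFrom_le (a : V ⊕ V) :
    #(stepsFrom ι a) ≤ Fintype.card ι * Fintype.card V := by
  rw [← Fintype.card_prod, ← card_univ]
  refine card_le_card_of_injOn (fun s => (s.1.1, a.elim (fun _ => s.1.2.2) fun _ => s.1.2.1))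
    (fun _ _ => mem_univ _) ?_
  rintro ⟨⟨x, i, j⟩, b⟩ hs ⟨⟨x', i', j'⟩, b'⟩ hs' hss'
  rw [mem_coe, mem_stepsFrom] at hs hs'
  rcases hs with ⟨rfl, rfl⟩ | ⟨rfl, rfl⟩ <;> grind [Joins]

/-- The walks with exactly `j` edges starting at `a`, each with its final vertex. -/
noncomputable def walksOfLength : ℕ → V ⊕ V → Finset (List (ι × V × V) × (V ⊕ V))
  | 0, a => {([], a)}
  | j + 1, a => (stepsFrom ι a).biUnion fun s =>
      (walksOfLength j s.2).image fun w => (s.1 :: w.1, w.2)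

theorem mem_walksOfLength {j : ℕ} :
    (W, b) ∈ walksOfLength j a ↔ W.length = j ∧ IsWalk a W b := by
  induction j generalizing a b W with
  | zero => cases W <;> simp [walksOfLength, IsWalk, eq_comm]
  | succ j ih =>
    cases W with
    | nil => simp [walksOfLength]
    | cons e W =>
      simp only [walksOfLength, mem_biUnion, mem_image, Prod.mk.injEq, List.cons.injEq,
        Prod.exists, mem_stepsFrom, ih, List.length_cons, IsWalk]
      grind

theorem card_walksOfLength_le (j : ℕ) (a : V ⊕ V) :
    #(walksOfLength (ι := ι) j a) ≤ (Fintype.card ι * Fintype.card V) ^ j := by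
  induction j generalizing a with
  | zero => simp [walksOfLength]
  | succ j ih =>
    rw [walksOfLength, pow_succ']
    exact (card_biUnion_le_card_mul _ _ _ fun s _ => card_image_le.trans (ih s.2)).trans
      (Nat.mul_le_mul_right _ (card_stepsFrom_le a))

theorem sum_recordProb_walksOfLength_le (j : ℕ) (a : V ⊕ V) :
    ∑ w ∈ walksOfLength (ι := ι) j a, recordProb w.1 ≤ load ι V ^ j := by
  have hprob : ∀ w ∈ walksOfLength (ι := ι) j a,
      recordProb w.1 = ((Fintype.card V : ℝ) ^ 2)⁻¹ ^ j := fun w hw => by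
    rw [recordProb, (mem_walksOfLength.1 hw).1, Fintype.card_prod, Nat.cast_mul, sq]
  rw [sum_congr rfl hprob, sum_const, nsmul_eq_mul]
  calc (#(walksOfLength (ι := ι) j a) : ℝ) * ((Fintype.card V : ℝ) ^ 2)⁻¹ ^ j
      ≤ (Fintype.card ι * Fintype.card V) ^ j * ((Fintype.card V : ℝ) ^ 2)⁻¹ ^ j := by
        gcongr
        exact_mod_cast card_walksOfLength_le j a
    _ = load ι V ^ j := by
        rw [← mul_pow, load]
        congr 1
        field_simp

/-- The walks with at most `ℓ` edges starting at `a`, each with its final vertex. -/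
noncomputable def shortWalks (ℓ : ℕ) (a : V ⊕ V) : Finset (List (ι × V × V) × (V ⊕ V)) :=
  (range (ℓ + 1)).biUnion fun j => walksOfLength j a

theorem mem_shortWalks : (W, b) ∈ shortWalks ℓ a ↔ W.length ≤ ℓ ∧ IsWalk a W b := by
  simp [shortWalks, mem_walksOfLength]

theorem sum_recordProb_shortWalks_le (hK : ∑ j ∈ range (ℓ + 1), load ι V ^ j ≤ K) (a : V ⊕ V) :
    ∑ w ∈ shortWalks (ι := ι) ℓ a, recordProb w.1 ≤ K :=
  calc ∑ w ∈ shortWalks (ι := ι) ℓ a, recordProb w.1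
      ≤ ∑ j ∈ range (ℓ + 1), ∑ w ∈ walksOfLength (ι := ι) j a, recordProb w.1 :=
        sum_biUnion_le_sum_sum _ _ fun w => recordProb_nonneg w.1
    _ ≤ ∑ j ∈ range (ℓ + 1), load ι V ^ j :=
        sum_le_sum fun j _ => sum_recordProb_walksOfLength_le j a
    _ ≤ K := hK

end WalkCounting

section Witnesses

variable {ι V : Type*} {ω : ι → V × V} {v : V ⊕ V} {x : ι} {e : ι × V × V}
  {W R : List (ι × V × V)} {ℓ : ℕ}

/-- The item of the last edge of `W`, if `W` is nonempty. -/
def lastItem (W : List (ι × V × V)) : Option ι :=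
  W.getLast?.map Prod.fst

theorem lastItem_append_cons (W₁ W₂ : List (ι × V × V)) (e : ι × V × V) :
    lastItem (W₁ ++ e :: W₂) = lastItem (e :: W₂) := by
  rw [lastItem, lastItem, List.getLast?_append_cons]

theorem lastItem_concat (W : List (ι × V × V)) (e : ι × V × V) :
    lastItem (W ++ [e]) = some e.1 := by
  rw [lastItem, List.getLast?_concat, Option.map_some]

/-- A potential reason for the item `x` to lie in the component of the vertex `v`: recorded edges,
together with `v` and `some x`. (An empty walk has no last item, hence the `Option`.) -/
abbrev Witness (ι V : Type*) := List (ι × V × V) × (V ⊕ V) × Option ι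

variable [Fintype ι] [Fintype V]

/-- The witnesses given by a single walk, leading from a vertex through its last item. -/
noncomputable def freeWitnesses (ℓ : ℕ) : Finset (Witness ι V) :=
  univ.biUnion fun v => (shortWalks ℓ v).image fun w => (w.1, v, lastItem w.1)

/-- The walks with at most `ℓ` edges starting at either endpoint of the edge `e`. -/
noncomputable def branches (ℓ : ℕ) (e : ι × V × V) : Finset (List (ι × V × V) × (V ⊕ V)) :=
  shortWalks ℓ (Sum.inl e.2.1) ∪ shortWalks ℓ (Sum.inr e.2.2)

/-- The witnesses given by two walks that hang off edges recorded in `R`, the first leading to a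
vertex and the second through its last item. -/
noncomputable def tetheredWitnesses (ℓ : ℕ) (R : List (ι × V × V)) : Finset (Witness ι V) :=
  (R.toFinset ×ˢ R.toFinset).biUnion fun e => (branches ℓ e.1 ×ˢ branches ℓ e.2).image fun w =>
    (w.1.1 ++ w.2.1, w.1.2, lastItem (e.2 :: w.2.1))

/-- The witnesses of length at most `ℓ` that use each item at most once and no item of `R`. -/
noncomputable def witnesses (ℓ : ℕ) (R : List (ι × V × V)) : Finset (Witness ι V) :=
  {w ∈ freeWitnesses ℓ ∪ tetheredWitnesses ℓ R |
    ((w.1 ++ R).map Prod.fst).Nodup ∧ w.1.length ≤ ℓ}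

theorem fresh_of_mem_witnesses {w : Witness ι V} (hw : w ∈ witnesses ℓ R) :
    ((w.1 ++ R).map Prod.fst).Nodup ∧ w.1.length ≤ ℓ :=
  (mem_filter.1 hw).2

theorem mem_freeWitnesses {b : V ⊕ V} (h : IsWalk v W b) (hℓ : W.length ≤ ℓ) :
    (W, v, lastItem W) ∈ freeWitnesses ℓ :=
  mem_biUnion.2 ⟨v, mem_univ _, mem_image_of_mem _ (mem_shortWalks.2 ⟨hℓ, h⟩)⟩

theorem mem_branches {a b c : V ⊕ V} (he : Joins e.2 a c) (h : IsWalk c W b)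
    (hℓ : W.length ≤ ℓ) : (W, b) ∈ branches ℓ e := by
  rcases he with ⟨-, rfl⟩ | ⟨-, rfl⟩
  · exact mem_union_right _ (mem_shortWalks.2 ⟨hℓ, h⟩)
  · exact mem_union_left _ (mem_shortWalks.2 ⟨hℓ, h⟩)

theorem mem_tetheredWitnesses {A B C D : List (ι × V × V)} {y z : ι × V × V} {b : V ⊕ V}
    (hfirst : W = A ++ y :: B) (hlast : W = C ++ z :: D) (hy : y ∈ R) (hz : z ∈ R)
    (hW : IsWalk v W b) (hℓ : (A ++ D).length ≤ ℓ) :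
    (A.reverse ++ D, v, lastItem W) ∈ tetheredWitnesses ℓ R := by
  rw [List.length_append] at hℓ
  obtain ⟨c, hvc, d, hcd, -⟩ := isWalk_append.1 (hfirst ▸ hW)
  obtain ⟨c', -, d', hcd', hdb⟩ := isWalk_append.1 (hlast ▸ hW)
  have hA : (A.reverse, v) ∈ branches ℓ y :=
    mem_branches hcd.symm hvc.reverse (by rw [List.length_reverse]; lia)
  have hD : (D, b) ∈ branches ℓ z := mem_branches hcd' hdb (by lia)
  rw [hlast, lastItem_append_cons]
  exact mem_biUnion.2 ⟨(y, z), by simp [hy, hz],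
    mem_image.2 ⟨((A.reverse, v), (D, b)), mem_product.2 ⟨hA, hD⟩, rfl⟩⟩

theorem exists_witness (hR : (R.map Prod.fst).Nodup) (hωR : Agrees ω R) (hω : TrailsBounded ℓ ω)
    (hconn : Connected ω v (Sum.inl (ω x).1)) :
    ∃ W, (W, v, some x) ∈ witnesses ℓ R ∧ Agrees ω W := by
  obtain ⟨W₀, b, htrail⟩ := hconn.exists_trail_concat
  set W := W₀ ++ [(x, ω x)]
  have hlast : lastItem W = some x := lastItem_concat _ _
  have hlen : W.length ≤ ℓ := hω _ _ _ htrail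
  have hfresh : ∀ U, U.Nodup → U ⊆ W → (∀ e ∈ U, e ∉ R) → ((U ++ R).map Prod.fst).Nodup :=
    fun U hU hUW hUR => (agrees_append.2 ⟨htrail.agrees.subset hUW, hωR⟩).nodup_items
      (hU.append hR.of_map hUR)
  by_cases hhit : ∃ e ∈ W, e ∈ R
  · obtain ⟨A, y, B, C, z, D, hAB, hCD, hy, hz, havoid, hsub⟩ :=
      exists_eq_append_cons_first_last hhit
    have hperm : (A.reverse ++ D).Perm (A ++ D) := (A.reverse_perm).append_right D
    have hAD : A.reverse ++ D ⊆ W := fun e he => hsub.subset (hperm.subset he)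
    have hℓ : (A ++ D).length ≤ ℓ := hsub.length_le.trans hlen
    refine ⟨A.reverse ++ D, mem_filter.2 ⟨mem_union_right _ ?_, ?_, hperm.length_eq.trans_le hℓ⟩,
      htrail.agrees.subset hAD⟩
    · exact hlast ▸ mem_tetheredWitnesses hAB hCD hy hz htrail.isWalk hℓ
    · exact hfresh _ (hperm.nodup_iff.2 (htrail.nodup.sublist hsub)) hAD
        fun e he => havoid e (hperm.subset he)
  · push Not at hhit
    exact ⟨W, mem_filter.2 ⟨mem_union_left _ (hlast ▸ mem_freeWitnesses htrail.isWalk hlen),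
      hfresh W htrail.nodup (List.Subset.refl W) hhit, hlen⟩, htrail.agrees⟩

variable {K : ℝ}

theorem sum_recordProb_freeWitnesses_le (hK : ∑ j ∈ range (ℓ + 1), load ι V ^ j ≤ K) :
    ∑ w ∈ freeWitnesses (ι := ι) (V := V) ℓ, recordProb w.1 ≤ 2 * Fintype.card V * K :=
  calc ∑ w ∈ freeWitnesses (ι := ι) (V := V) ℓ, recordProb w.1
      ≤ ∑ v : V ⊕ V, ∑ w ∈ shortWalks (ι := ι) ℓ v, recordProb w.1 :=
        sum_biUnion_image_le_sum_sum _ _ _ fun w => recordProb_nonneg w.1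
    _ ≤ ∑ _v : V ⊕ V, K := sum_le_sum fun v _ => sum_recordProb_shortWalks_le hK v
    _ = 2 * Fintype.card V * K := by
        rw [sum_const, card_univ, Fintype.card_sum, nsmul_eq_mul, Nat.cast_add, two_mul]

theorem sum_recordProb_branches_le (hK : ∑ j ∈ range (ℓ + 1), load ι V ^ j ≤ K)
    (e : ι × V × V) : ∑ w ∈ branches ℓ e, recordProb w.1 ≤ 2 * K := by
  have hunion := sum_union_le_add_sum (shortWalks ℓ (Sum.inl e.2.1)) (shortWalks ℓ (Sum.inr e.2.2))
    fun w : List (ι × V × V) × (V ⊕ V) => recordProb_nonneg w.1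
  rw [branches]
  linarith [sum_recordProb_shortWalks_le hK (Sum.inl e.2.1),
    sum_recordProb_shortWalks_le hK (Sum.inr e.2.2)]

theorem sum_recordProb_tetheredWitnesses_le (hK : ∑ j ∈ range (ℓ + 1), load ι V ^ j ≤ K) :
    ∑ w ∈ tetheredWitnesses ℓ R, recordProb w.1 ≤ 4 * K ^ 2 * R.length ^ 2 :=
  calc ∑ w ∈ tetheredWitnesses ℓ R, recordProb w.1
      ≤ ∑ e ∈ R.toFinset ×ˢ R.toFinset, ∑ w ∈ branches ℓ e.1 ×ˢ branches ℓ e.2,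
          recordProb (w.1.1 ++ w.2.1) :=
        sum_biUnion_image_le_sum_sum _ _ _ fun w => recordProb_nonneg w.1
    _ = (∑ e ∈ R.toFinset, ∑ w ∈ branches ℓ e, recordProb w.1) ^ 2 := by
        simp only [recordProb_append, sq, sum_product, sum_mul_sum]
    _ ≤ (R.length * (2 * K)) ^ 2 := by
        gcongr
        · exact sum_nonneg fun e _ => sum_nonneg fun w _ => recordProb_nonneg w.1
        · refine (sum_le_card_nsmul _ _ _ fun e _ => sum_recordProb_branches_le hK e).trans ?_
          rw [nsmul_eq_mul]
          have hK₁ : 1 ≤ K := one_le_of_sum_load_pow_le hK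
          gcongr
          exact R.toFinset_card_le
    _ = 4 * K ^ 2 * R.length ^ 2 := by ring

theorem sum_recordProb_witnesses_le (hK : ∑ j ∈ range (ℓ + 1), load ι V ^ j ≤ K) :
    ∑ w ∈ witnesses ℓ R, recordProb w.1 ≤
      2 * Fintype.card V * K + 4 * K ^ 2 * R.length ^ 2 :=
  calc ∑ w ∈ witnesses ℓ R, recordProb w.1
      ≤ ∑ w ∈ freeWitnesses ℓ ∪ tetheredWitnesses ℓ R, recordProb w.1 :=
        sum_le_sum_of_subset_of_nonneg (filter_subset _ _) fun w _ _ => recordProb_nonneg w.1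
    _ ≤ ∑ w ∈ freeWitnesses (ι := ι) (V := V) ℓ, recordProb w.1 +
          ∑ w ∈ tetheredWitnesses ℓ R, recordProb w.1 :=
        sum_union_le_add_sum _ _ fun w => recordProb_nonneg w.1
    _ ≤ 2 * Fintype.card V * K + 4 * K ^ 2 * R.length ^ 2 :=
        add_le_add (sum_recordProb_freeWitnesses_le hK) (sum_recordProb_tetheredWitnesses_le hK)

end Witnesses

section Moments

variable {ι V : Type*} [Fintype ι] [Fintype V] {ω : ι → V × V} {R : List (ι × V × V)}
  {f : (ι → V × V) → ℝ} {k ℓ u U : ℕ} {s K : ℝ}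

/-- The pairs of a vertex and an item lying in the same component; their number is `∑ v, C(v)`. -/
noncomputable def connectedPairs (ω : ι → V × V) : Finset ((V ⊕ V) × ι) :=
  {p | Connected ω p.1 (Sum.inl (ω p.2).1)}

/-- The number of connected pairs, truncated to the event that all trails have length at most
`ℓ`. -/
noncomputable def boundedPairs (ℓ : ℕ) (ω : ι → V × V) : ℕ :=
  if TrailsBounded ℓ ω then #(connectedPairs ω) else 0

theorem boundedPairs_le (hR : (R.map Prod.fst).Nodup) (hωR : Agrees ω R) :
    boundedPairs ℓ ω ≤ #{w ∈ witnesses ℓ R | Agrees ω w.1} := by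
  rw [boundedPairs]
  split_ifs with hω
  · have hsub : (connectedPairs ω).image (Prod.map id some) ⊆
        ({w ∈ witnesses ℓ R | Agrees ω w.1} : Finset (Witness ι V)).image Prod.snd :=
      image_subset_iff.2 fun p hp => by
        obtain ⟨W, hW, hωW⟩ := exists_witness hR hωR hω (mem_filter.1 hp).2
        exact mem_image.2 ⟨_, mem_filter.2 ⟨hW, hωW⟩, rfl⟩
    calc #(connectedPairs ω) = #((connectedPairs ω).image (Prod.map id some)) :=
          (card_image_of_injective _
            (Function.injective_id.prodMap (Option.some_injective ι))).symm
      _ ≤ _ := (card_le_card hsub).trans card_image_le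
  · exact Nat.zero_le _

/-- An upper bound for the conditional expectation of the number of connected pairs when the edges
of at most `u` items are known, provided the geometric series of the load is at most `K`. -/
noncomputable def pairsBound (V : Type*) [Fintype V] (K : ℝ) (u : ℕ) : ℝ :=
  2 * Fintype.card V * K + 4 * K ^ 2 * u ^ 2

variable [DecidableEq ι]

theorem CylinderBound.boundedPairs_mul (hK : ∑ j ∈ range (ℓ + 1), load ι V ^ j ≤ K)
    (hf : ∀ ω, 0 ≤ f ω) (hbound : CylinderBound f (u + ℓ) s) (hu : u ≤ U) :
    CylinderBound (fun ω => boundedPairs ℓ ω * f ω) u (s * pairsBound V K U) := fun R hR hRu => by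
  have hs : 0 ≤ s := by
    simpa [recordProb] using
      (sum_nonneg fun ω _ => hf ω).trans (hbound [] List.nodup_nil (Nat.zero_le _))
  have hweight : ∑ w ∈ witnesses ℓ R, recordProb w.1 ≤ pairsBound V K U := by
    refine (sum_recordProb_witnesses_le hK).trans ?_
    unfold pairsBound
    gcongr
    exact hRu.trans hu
  calc ∑ ω ∈ cylinder R, boundedPairs ℓ ω * f ω
      ≤ s * (∑ w ∈ witnesses ℓ R, recordProb w.1) * recordProb R := by
        refine hbound.sum_mul_le hf _ Prod.fst (fun w hw => ?_)
          fun ω hω => Nat.cast_le.2 (boundedPairs_le hR hω)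
        obtain ⟨hnodup, hlen⟩ := fresh_of_mem_witnesses hw
        exact ⟨hnodup, by rw [List.length_append]; lia⟩
    _ ≤ s * pairsBound V K U * recordProb R := by
        gcongr
        exact recordProb_nonneg R

variable [Nonempty V]

theorem cylinderBound_boundedPairs_pow (hK : ∑ j ∈ range (ℓ + 1), load ι V ^ j ≤ K)
    (hu : u + ℓ * k ≤ U) :
    CylinderBound (fun ω : ι → V × V => (boundedPairs ℓ ω : ℝ) ^ k) u
      (Fintype.card (ι → V × V) * pairsBound V K U ^ k) := by
  induction k generalizing u with
  | zero => simpa using cylinderBound_one (ι := ι) (α := V × V) u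
  | succ k ih =>
    simp only [pow_succ' (boundedPairs ℓ _ : ℝ), pow_succ (pairsBound V K U), ← mul_assoc]
    exact (ih (by lia)).boundedPairs_mul hK (fun ω => by positivity) (by lia)

theorem sum_boundedPairs_pow_le (hK : ∑ j ∈ range (ℓ + 1), load ι V ^ j ≤ K) (k : ℕ) :
    ∑ ω : ι → V × V, (boundedPairs ℓ ω : ℝ) ^ k ≤
      Fintype.card (ι → V × V) * pairsBound V K (ℓ * k) ^ k := by
  simpa [recordProb] using cylinderBound_boundedPairs_pow (ι := ι) hK (zero_add (ℓ * k)).le []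
    List.nodup_nil le_rfl

theorem card_not_trailsBounded_le (ℓ : ℕ) :
    (#{ω : ι → V × V | ¬ TrailsBounded ℓ ω} : ℝ) ≤
      Fintype.card (ι → V × V) * (2 * Fintype.card V * load ι V ^ (ℓ + 1)) := by
  set trails : V ⊕ V → Finset (List (ι × V × V) × (V ⊕ V)) := fun a =>
    {w ∈ walksOfLength (ℓ + 1) a | (w.1.map Prod.fst).Nodup}
  have hcover : ({ω | ¬ TrailsBounded ℓ ω} : Finset (ι → V × V)) ⊆
      univ.biUnion fun a => (trails a).biUnion fun w => cylinder w.1 := fun ω hω => by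
    obtain ⟨a, W, b, hW, hlen⟩ := exists_trail_of_not_trailsBounded (mem_filter.1 hω).2
    exact mem_biUnion.2 ⟨a, mem_univ a, mem_biUnion.2 ⟨(W, b), mem_filter.2
      ⟨mem_walksOfLength.2 ⟨hlen, hW.isWalk⟩, hW.agrees.nodup_items hW.nodup⟩,
      mem_cylinder.2 hW.agrees⟩⟩
  calc (#{ω : ι → V × V | ¬ TrailsBounded ℓ ω} : ℝ)
      ≤ ∑ a, ∑ w ∈ trails a, (#(cylinder w.1) : ℝ) := by
        exact_mod_cast (card_le_card hcover).trans <|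
          card_biUnion_le.trans <| sum_le_sum fun a _ => card_biUnion_le
    _ = ∑ a, Fintype.card (ι → V × V) * ∑ w ∈ trails a, recordProb w.1 := by
        refine sum_congr rfl fun a _ => ?_
        rw [mul_sum]
        exact sum_congr rfl fun w hw => card_cylinder (mem_filter.1 hw).2
    _ ≤ ∑ _a : V ⊕ V, Fintype.card (ι → V × V) * load ι V ^ (ℓ + 1) := by
        gcongr with a
        exact (sum_le_sum_of_subset_of_nonneg (filter_subset _ _) fun w _ _ =>
          recordProb_nonneg w.1).trans (sum_recordProb_walksOfLength_le _ a)
    _ = Fintype.card (ι → V × V) * (2 * Fintype.card V * load ι V ^ (ℓ + 1)) := by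
        rw [sum_const, card_univ, Fintype.card_sum, nsmul_eq_mul, Nat.cast_add]
        ring

theorem card_filter_lt_mul_pow_le_sum_pow {Ω : Type*} [Fintype Ω] {X : Ω → ℝ} {t : ℝ}
    (ht : 0 ≤ t) (hX : ∀ ω, 0 ≤ X ω) (k : ℕ) :
    #{ω | t < X ω} * t ^ k ≤ ∑ ω, X ω ^ k :=
  calc #{ω | t < X ω} * t ^ k ≤ ∑ ω with t < X ω, X ω ^ k := by
        rw [← nsmul_eq_mul]
        exact card_nsmul_le_sum _ _ _ fun ω hω => pow_le_pow_left₀ ht (mem_filter.1 hω).2.le k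
    _ ≤ ∑ ω, X ω ^ k :=
        sum_le_sum_of_subset_of_nonneg (filter_subset _ _) fun ω _ _ => pow_nonneg (hX ω) k

theorem card_lt_boundedPairs_le (hK : ∑ j ∈ range (ℓ + 1), load ι V ^ j ≤ K) (k : ℕ) :
    (#{ω : ι → V × V | Real.exp 1 * pairsBound V K (ℓ * k) < boundedPairs ℓ ω} : ℝ) ≤
      Fintype.card (ι → V × V) * Real.exp (-k) := by
  have hK₁ : 1 ≤ K := one_le_of_sum_load_pow_le hK
  have hB : 0 < pairsBound V K (ℓ * k) := by
    unfold pairsBound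
    positivity
  have ht : 0 ≤ Real.exp 1 * pairsBound V K (ℓ * k) := by positivity
  have hmarkov := (card_filter_lt_mul_pow_le_sum_pow ht
    (fun ω : ι → V × V => Nat.cast_nonneg (boundedPairs ℓ ω)) k).trans
      (sum_boundedPairs_pow_le hK k)
  rw [mul_pow, ← mul_assoc] at hmarkov
  rw [Real.exp_neg, ← div_eq_mul_inv, le_div_iff₀ (Real.exp_pos _), ← Real.exp_one_pow]
  exact le_of_mul_le_mul_right hmarkov (pow_pos hB k)

theorem card_lt_connectedPairs_le (hK : ∑ j ∈ range (ℓ + 1), load ι V ^ j ≤ K) (k : ℕ) :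
    (#{ω : ι → V × V | Real.exp 1 * pairsBound V K (ℓ * k) < #(connectedPairs ω)} : ℝ) ≤
      Fintype.card (ι → V × V) *
        (Real.exp (-k) + 2 * Fintype.card V * load ι V ^ (ℓ + 1)) := by
  have hsub : ({ω | Real.exp 1 * pairsBound V K (ℓ * k) < #(connectedPairs ω)} :
      Finset (ι → V × V)) ⊆
      ({ω | Real.exp 1 * pairsBound V K (ℓ * k) < boundedPairs ℓ ω} : Finset (ι → V × V)) ∪
        ({ω | ¬ TrailsBounded ℓ ω} : Finset (ι → V × V)) := fun ω hω => by
    by_cases hℓ : TrailsBounded ℓ ω <;> simp_all [boundedPairs]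
  rw [mul_add]
  refine le_trans ?_ (add_le_add (card_lt_boundedPairs_le hK k) (card_not_trailsBounded_le ℓ))
  exact_mod_cast (card_le_card hsub).trans (card_union_le _ _)

end Moments

section CuckooGraph

variable {ι V : Type*} {ω : ι → V × V} {a b c : V ⊕ V}

theorem Connected.refl (ω : ι → V × V) (a : V ⊕ V) : Connected ω a a :=
  ⟨[], rfl, by simp [Agrees]⟩

theorem Connected.symm : Connected ω a b → Connected ω b a := fun ⟨W, hwalk, hagrees⟩ =>
  ⟨W.reverse, hwalk.reverse, hagrees.subset fun _ => List.mem_reverse.1⟩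

theorem Connected.trans : Connected ω a b → Connected ω b c → Connected ω a c :=
  fun ⟨W₁, hwalk₁, hagrees₁⟩ ⟨W₂, hwalk₂, hagrees₂⟩ =>
    ⟨W₁ ++ W₂, isWalk_append.2 ⟨b, hwalk₁, hwalk₂⟩, agrees_append.2 ⟨hagrees₁, hagrees₂⟩⟩

variable {n m : ℕ} {h₀ h₁ : Fin n → Fin m}

theorem connected_of_cuckooConn {a b : Fin m ⊕ Fin m} (h : cuckooConn n m h₀ h₁ a b) :
    Connected (fun x => (h₀ x, h₁ x)) a b := by
  induction h with
  | rel a b hab =>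
    obtain ⟨x, rfl, rfl⟩ := hab
    exact ⟨[(x, h₀ x, h₁ x)], isWalk_singleton.2 (Or.inl ⟨rfl, rfl⟩), by simp [Agrees]⟩
  | refl a => exact Connected.refl _ a
  | symm a b _ ih => exact ih.symm
  | trans a b c _ _ ihab ihbc => exact ihab.trans ihbc

theorem sum_cuckooC_le (h₀ h₁ : Fin n → Fin m) :
    ∑ v, cuckooC n m h₀ h₁ v ≤ #(connectedPairs fun x => (h₀ x, h₁ x)) := by
  rw [connectedPairs, ← univ_product_univ, card_filter, sum_product]
  simp only [← card_filter]
  refine sum_le_sum fun v _ => ?_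
  rw [cuckooC, Nat.card_eq_fintype_card, Fintype.card_subtype]
  exact card_le_card <| monotone_filter_right _ fun x _ hx => (connected_of_cuckooConn hx).symm

theorem cuckooPr_mono {E F : HashPair n m → Prop} (h : ∀ ω, E ω → F ω) :
    cuckooPr n m E ≤ cuckooPr n m F := by
  unfold cuckooPr
  gcongr
  exact Nat.card_mono (Set.toFinite {ω | F ω}) h

theorem cuckooPr_eq (P : (Fin n → Fin m × Fin m) → Prop) :
    cuckooPr n m (fun ω => P fun x => (ω.1 x, ω.2 x)) =
      #{ω | P ω} / Fintype.card (Fin n → Fin m × Fin m) := by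
  let e : HashPair n m ≃ (Fin n → Fin m × Fin m) :=
    (Equiv.arrowProdEquivProdArrow (Fin n) (fun _ => Fin m) fun _ => Fin m).symm
  have hcard : Nat.card {ω : HashPair n m // P fun x => (ω.1 x, ω.2 x)} = Nat.card {ω // P ω} :=
    Nat.card_congr (e.subtypeEquiv fun ω => Iff.rfl)
  rw [cuckooPr, ← Fintype.card_subtype, ← Nat.card_eq_fintype_card, ← Nat.card_eq_fintype_card,
    Nat.card_congr e, hcard]

theorem cuckooPr_lt_average_le [NeZero m] {ℓ k : ℕ} {K : ℝ}
    (hK : ∑ j ∈ range (ℓ + 1), ((n : ℝ) / m) ^ j ≤ K) (hm : (ℓ * k) ^ 2 ≤ m) :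
    cuckooPr n m (fun ω => Real.exp 1 * (K + 2 * K ^ 2) <
        1 / (2 * (m : ℝ)) * ∑ v, (cuckooC n m ω.1 ω.2 v : ℝ)) ≤
      Real.exp (-k) + 2 * m * ((n : ℝ) / m) ^ (ℓ + 1) := by
  have hm₀ : (0 : ℝ) < m := Nat.cast_pos.2 (NeZero.pos m)
  have hload : load (Fin n) (Fin m) = n / m := by simp only [load, Fintype.card_fin]
  rw [← hload] at hK ⊢
  have hbound : pairsBound (Fin m) K (ℓ * k) ≤ 2 * m * (K + 2 * K ^ 2) := by
    have hm' : (((ℓ * k : ℕ) : ℝ)) ^ 2 ≤ m := by exact_mod_cast hm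
    have := mul_le_mul_of_nonneg_left hm' (sq_nonneg K)
    rw [pairsBound, Fintype.card_fin]
    linarith
  calc _ ≤ cuckooPr n m (fun ω => Real.exp 1 * pairsBound (Fin m) K (ℓ * k) <
        #(connectedPairs fun x => (ω.1 x, ω.2 x))) := cuckooPr_mono fun ω hω => by
          rw [one_div_mul_eq_div, lt_div_iff₀ (by positivity)] at hω
          calc Real.exp 1 * pairsBound (Fin m) K (ℓ * k)
              ≤ Real.exp 1 * (2 * m * (K + 2 * K ^ 2)) := by gcongr
            _ < ∑ v, (cuckooC n m ω.1 ω.2 v : ℝ) := by linarith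
            _ ≤ _ := by exact_mod_cast sum_cuckooC_le ω.1 ω.2
    _ ≤ _ := by
        rw [cuckooPr_eq fun ω => Real.exp 1 * pairsBound (Fin m) K (ℓ * k) < #(connectedPairs ω),
          div_le_iff₀' (by positivity)]
        simpa only [Fintype.card_fin] using card_lt_connectedPairs_le hK k

end CuckooGraph

section Asymptotics

open Filter Real

theorem eventually_ceil_log_sq_pow_four_le :
    ∀ᶠ n : ℕ in atTop, (⌈log n ^ 2⌉₊ * ⌈log n ^ 2⌉₊) ^ 2 ≤ n := by
  have hlog : Tendsto (fun n : ℕ => log n) atTop atTop :=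
    tendsto_log_atTop.comp tendsto_natCast_atTop_atTop
  have hsmall := tendsto_natCast_atTop_atTop.eventually
    ((isLittleO_pow_log_id_atTop (n := 8)).bound (show (0 : ℝ) < 1 / 16 by norm_num))
  filter_upwards [hsmall, hlog.eventually_ge_atTop 1] with n hn hn₁
  have hceil : (⌈log n ^ 2⌉₊ : ℝ) ≤ 2 * log n ^ 2 := by
    have := Nat.ceil_lt_add_one (sq_nonneg (log n))
    nlinarith
  have hpow : log n ^ 8 ≤ 1 / 16 * n := by
    simpa [abs_of_nonneg (zero_le_one.trans hn₁)] using hn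
  have : ((⌈log n ^ 2⌉₊ * ⌈log n ^ 2⌉₊ : ℝ)) ^ 2 ≤ n :=
    calc _ ≤ (2 * log n ^ 2 * (2 * log n ^ 2)) ^ 2 := by gcongr
      _ = 16 * log n ^ 8 := by ring
      _ ≤ n := by linarith
  exact_mod_cast this

theorem eventually_exp_add_mul_exp_le_rpow {β : ℝ} (hβ : 0 < β) :
    ∀ᶠ n : ℕ in atTop, exp (-⌈log n ^ 2⌉₊) + 2 * n * exp (-(β * ⌈log n ^ 2⌉₊)) ≤
      (n : ℝ) ^ (-(min 1 β / 2 * log n)) := by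
  set c := min 1 β / 2
  have h2c : 2 * c = min 1 β := mul_div_cancel₀ _ two_ne_zero
  have hc : 0 < c := half_pos (lt_min one_pos hβ)
  have hlog : Tendsto (fun n : ℕ => log n) atTop atTop :=
    tendsto_log_atTop.comp tendsto_natCast_atTop_atTop
  filter_upwards [eventually_ge_atTop 3, hlog.eventually_ge_atTop (2 / c)] with n hn hlogn
  have hn₃ : (3 : ℝ) ≤ n := by exact_mod_cast hn
  have hexp : ∀ {b : ℝ}, 2 * c ≤ b → exp (-(b * ⌈log n ^ 2⌉₊)) ≤ exp (-(2 * c * log n ^ 2)) :=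
    fun hb => exp_le_exp.2 <| neg_le_neg <|
      mul_le_mul hb (Nat.le_ceil _) (sq_nonneg _) (by linarith)
  have hexp₁ := hexp (h2c.trans_le (min_le_left 1 β))
  have hexpβ := hexp (h2c.trans_le (min_le_right 1 β))
  rw [one_mul] at hexp₁
  calc exp (-⌈log n ^ 2⌉₊) + 2 * n * exp (-(β * ⌈log n ^ 2⌉₊))
      ≤ exp (-(2 * c * log n ^ 2)) + 2 * n * exp (-(2 * c * log n ^ 2)) := by gcongr
    _ = (1 + 2 * n) * exp (-(2 * c * log n ^ 2)) := by ring
    _ ≤ n ^ 2 * exp (-(2 * c * log n ^ 2)) := by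
        gcongr
        nlinarith
    _ = exp (2 * log n - 2 * c * log n ^ 2) := by
        rw [sub_eq_add_neg, exp_add, two_mul (log n), exp_add, exp_log (by linarith), sq]
    _ ≤ exp (log n * -(c * log n)) := by
        rw [div_le_iff₀ hc] at hlogn
        gcongr
        nlinarith
    _ = (n : ℝ) ^ (-(c * log n)) := (rpow_def_of_pos (by linarith) _).symm

variable {ε : ℝ} {n m : ℕ}

theorem load_le_inv_one_add (hε : 0 < ε) (hm : (1 + ε) * n ≤ m) : (n : ℝ) / m ≤ (1 + ε)⁻¹ :=
  div_le_of_le_mul₀ (by positivity) (by positivity)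
    ((le_inv_mul_iff₀ (by positivity)).2 hm)

theorem sum_load_pow_le (hε : 0 < ε) (hm : (1 + ε) * n ≤ m) (ℓ : ℕ) :
    ∑ j ∈ range ℓ, ((n : ℝ) / m) ^ j ≤ (1 + ε) / ε := by
  have hr₀ : 0 ≤ (1 + ε)⁻¹ := by positivity
  have hr₁ : (1 + ε)⁻¹ < 1 := inv_lt_one_of_one_lt₀ (by linarith)
  calc ∑ j ∈ range ℓ, ((n : ℝ) / m) ^ j ≤ ∑ j ∈ range ℓ, (1 + ε)⁻¹ ^ j := by
        gcongr
        exact load_le_inv_one_add hε hm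
    _ ≤ ∑' j, (1 + ε)⁻¹ ^ j :=
        (summable_geometric_of_lt_one hr₀ hr₁).sum_le_tsum _ fun j _ => pow_nonneg hr₀ j
    _ = (1 - (1 + ε)⁻¹)⁻¹ := tsum_geometric_of_lt_one hr₀ hr₁
    _ = (1 + ε) / ε := by
        rw [inv_eq_iff_eq_inv, inv_div]
        field_simp
        ring

theorem mul_load_pow_succ_le (hε : 0 < ε) (hm₀ : 0 < m) (hm : (1 + ε) * n ≤ m) (ℓ : ℕ) :
    m * ((n : ℝ) / m) ^ (ℓ + 1) ≤ n * exp (-(log (1 + ε) * ℓ)) :=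
  calc m * ((n : ℝ) / m) ^ (ℓ + 1) = n * ((n : ℝ) / m) ^ ℓ := by
        rw [pow_succ]
        field_simp
    _ ≤ n * (1 + ε)⁻¹ ^ ℓ := by
        gcongr
        exact load_le_inv_one_add hε hm
    _ = n * exp (-(log (1 + ε) * ℓ)) := by
        rw [exp_neg, mul_comm (log _), exp_nat_mul, exp_log (by linarith), inv_pow]

end Asymptotics

end Cuckoo

/-- If `(1+ε)·n ≤ m` then with probability at least `1 − n^{−c·log n}`, the average
component size `(1/(2m))·∑_v C(v)` over all `2m` vertices is at most a constant `c₃`,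
where `c₃, c > 0` and the threshold `n₀` depend only on `ε`. -/
theorem cuckoo_average_component_size_bound (ε : ℝ) (hε : 0 < ε) :
    ∃ c₃ c : ℝ, 0 < c₃ ∧ 0 < c ∧ ∃ n₀ : ℕ, ∀ n m : ℕ, n₀ ≤ n → (1 + ε) * n ≤ m →
      cuckooPr n m (fun ω =>
          c₃ < (1 / (2 * (m : ℝ))) * ∑ v : Fin m ⊕ Fin m, (cuckooC n m ω.1 ω.2 v : ℝ))
        ≤ (n : ℝ) ^ (-(c * Real.log n)) := by
  have hβ : 0 < Real.log (1 + ε) := Real.log_pos (by linarith)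
  obtain ⟨n₀, hn₀⟩ := Filter.eventually_atTop.1 <| (Filter.eventually_gt_atTop 0).and <|
    Cuckoo.eventually_ceil_log_sq_pow_four_le.and (Cuckoo.eventually_exp_add_mul_exp_le_rpow hβ)
  set K := (1 + ε) / ε
  refine ⟨Real.exp 1 * (K + 2 * K ^ 2), min 1 (Real.log (1 + ε)) / 2, by positivity, by positivity,
    n₀, fun n m hn hm => ?_⟩
  obtain ⟨hn_pos, hpow, hdecay⟩ := hn₀ n hn
  have hnm : n ≤ m := by
    have : (n : ℝ) ≤ m := by nlinarith [n.cast_nonneg (α := ℝ)]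
    exact_mod_cast this
  have hm_pos : 0 < m := hn_pos.trans_le hnm
  have : NeZero m := ⟨hm_pos.ne'⟩
  have hK := Cuckoo.sum_load_pow_le hε hm (⌈Real.log n ^ 2⌉₊ + 1)
  refine (Cuckoo.cuckooPr_lt_average_le hK (hpow.trans hnm)).trans (le_trans ?_ hdecay)
  linarith [Cuckoo.mul_load_pow_succ_le hε hm_pos hm ⌈Real.log n ^ 2⌉₊]
end
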